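/- arXiv:1601.05595 — 8 statements merged into one kernel-verified Lean document; each statement's English description precedes it below -/
import Mathlib

section
/- Let C be a q-ary (n,k,r) LRC with all symbol locality, where k ≥ 1 and r ≥ 1. Then there exist a natural number l and vectors h_1,…,h_l in the dual code C⊥ that are linearly independent over F_q, each of Hamming weight at most r+1, whose supports together cover all of {1,…,n}; moreover such a family can be chosen with l ≤ n − k (and necessarily n ≤ l(r+1)). -/
/-- Coordinate `i` of the linear code `C` has locality `r`. -/
def HasLocality {F ι : Type*} [Field F] [Fintype ι]
    (C : Submodule F (ι → F)) (i : ι) (r : ℕ) : Prop :=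
  ∃ R : Finset ι, i ∉ R ∧ R.card ≤ r ∧
    ∀ c ∈ C, ∀ c' ∈ C, (∀ j ∈ R, c j = c' j) → c i = c' i

/-!
By linearity, a coordinate `i` of locality `r` is a fixed linear combination of the coordinates in
its recovery set; read as a parity check, this is a dual codeword of weight at most `r + 1` that is
nonzero at `i`. Among the checks obtained for all `i`, choose a basis of their span. It still covers
every coordinate, since vectors vanishing at `i` span only vectors vanishing at `i`. Its size is at
most `dim C⊥ = n - dim C`, and counting supports gives `n ≤ l (r + 1)`.
-/

open LinearMap Module Submodule

/-- The dual code `C⊥`: the vectors orthogonal to every codeword of `C` under the standard bilinear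
form. -/
def dualCode {R ι : Type*} [CommSemiring R] [Fintype ι] (C : Submodule R (ι → R)) :
    Submodule R (ι → R) :=
  BilinForm.orthogonal (dotProductBilin R R) C

theorem mem_dualCode {R ι : Type*} [CommSemiring R] [Fintype ι] {C : Submodule R (ι → R)}
    {h : ι → R} : h ∈ dualCode C ↔ ∀ c ∈ C, c ⬝ᵥ h = 0 :=
  Iff.rfl

theorem exists_mem_apply_ne_zero_of_mem_span {R M N : Type*} [Semiring R] [AddCommMonoid M]
    [AddCommMonoid N] [Module R M] [Module R N] (f : M →ₗ[R] N) {s : Set M} {x : M}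
    (hx : x ∈ span R s) (hfx : f x ≠ 0) : ∃ y ∈ s, f y ≠ 0 := by
  contrapose! hfx
  exact eqOn_span (g := 0) hfx hx

theorem exists_fin_linearIndependent_comp (K : Type*) {ι V : Type*} [DivisionRing K]
    [AddCommGroup V] [Module K V] [Finite ι] (v : ι → V) :
    ∃ (l : ℕ) (a : Fin l → ι), span K (Set.range (v ∘ a)) = span K (Set.range v) ∧
      LinearIndependent K (v ∘ a) := by
  obtain ⟨κ, a, ha, hspan, hli⟩ := exists_linearIndependent' K v
  have : Finite κ := Finite.of_injective a ha
  let e := (Finite.equivFin κ).symm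
  refine ⟨Nat.card κ, a ∘ e, ?_, hli.comp e e.injective⟩
  rw [← Function.comp_assoc, e.surjective.range_comp, hspan]

theorem card_le_card_mul_of_hammingNorm_le {ι κ : Type*} {β : ι → Type*} [Fintype ι] [Fintype κ]
    [∀ i, Zero (β i)] [∀ i, DecidableEq (β i)] {h : κ → ∀ i, β i} {w : ℕ}
    (hweight : ∀ a, hammingNorm (h a) ≤ w) (hcover : ∀ i, ∃ a, h a i ≠ 0) :
    Fintype.card ι ≤ Fintype.card κ * w := by
  classical
  have hunion : Finset.univ.biUnion (fun a ↦ {i | h a i ≠ 0}) = (Finset.univ : Finset ι) := by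
    ext i
    simpa using hcover i
  rw [← Finset.card_univ, ← hunion]
  exact Finset.card_biUnion_le_card_mul _ _ w fun a _ ↦ hweight a

theorem exists_forall_apply_eq_sum_mul {F ι : Type*} [Field F] {C : Submodule F (ι → F)} {i : ι}
    {R : Finset ι} (hR : ∀ c ∈ C, (∀ j ∈ R, c j = 0) → c i = 0) :
    ∃ a : ι → F, ∀ c ∈ C, c i = ∑ j ∈ R, a j * c j := by
  let coord (j : ι) : C →ₗ[F] F := (LinearMap.proj j).domRestrict C
  have hker : ⨅ j : R, ker (coord j) ≤ ker (coord i) := by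
    intro c hc
    simp only [Submodule.mem_iInf, LinearMap.mem_ker] at hc
    exact hR c c.2 fun j hj ↦ hc ⟨j, hj⟩
  have hspan : coord i ∈ span F (coord '' R) := by
    rw [Set.image_eq_range]
    exact mem_span_of_iInf_ker_le_ker hker
  obtain ⟨a, ha⟩ := (mem_span_image_finset_iff_exists_fun' F).mp hspan
  refine ⟨a, fun c hc ↦ ?_⟩
  simpa [coord] using (LinearMap.congr_fun ha ⟨c, hc⟩).symm

section DualCode

variable {F ι : Type*} [Field F] [Fintype ι] {C : Submodule F (ι → F)}

variable (C) in
theorem finrank_dualCode_add_finrank :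
    finrank F (dualCode C) + finrank F C = Fintype.card ι := by
  have hker : ker (dotProductBilin F F : (ι → F) →ₗ[F] (ι → F) →ₗ[F] F) = ⊥ :=
    ker_eq_bot'.mpr fun _ hv ↦ dotProduct_eq_zero_iff.mp (LinearMap.congr_fun hv)
  have hsum := BilinForm.finrank_add_finrank_orthogonal' (B := dotProductBilin F F) C
  rwa [hker, inf_bot_eq, finrank_bot, add_zero, finrank_fintype_fun_eq_card, add_comm] at hsum

theorem card_add_finrank_le_of_mem_dualCode {κ : Type*} [Fintype κ] {h : κ → ι → F}
    (hdual : ∀ a, h a ∈ dualCode C) (hli : LinearIndependent F h) :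
    Fintype.card κ + finrank F C ≤ Fintype.card ι := by
  have hli' : LinearIndependent F fun a ↦ (⟨h a, hdual a⟩ : dualCode C) :=
    .of_comp (dualCode C).subtype hli
  rw [← finrank_dualCode_add_finrank C]
  gcongr
  exact hli'.fintype_card_le_finrank

theorem HasLocality.exists_mem_dualCode [DecidableEq F] {i : ι} {r : ℕ} (hi : HasLocality C i r) :
    ∃ h ∈ dualCode C, hammingNorm h ≤ r + 1 ∧ h i ≠ 0 := by
  classical
  obtain ⟨R, hiR, hcard, hR⟩ := hi
  obtain ⟨a, ha⟩ := exists_forall_apply_eq_sum_mul fun c hc ↦ hR c hc 0 C.zero_mem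
  let h : ι → F := Pi.single i 1 - ∑ j ∈ R, Pi.single j (a j)
  have hsupp : ∀ j ∉ insert i R, h j = 0 := by
    intro j hj
    rw [Finset.mem_insert, not_or] at hj
    simp [h, Finset.sum_apply, Pi.single_apply, hj]
  refine ⟨h, mem_dualCode.mpr fun c hc ↦ ?_, ?_, ?_⟩
  · simp [h, dotProduct_sub, dotProduct_sum, ha c hc, mul_comm]
  · calc hammingNorm h ≤ (insert i R).card :=
          Finset.card_le_card fun j hj ↦ by_contra fun hjR ↦
            (Finset.mem_filter.mp hj).2 (hsupp j hjR)
      _ ≤ r + 1 := (Finset.card_insert_le i R).trans (by gcongr)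
  · simp [h, Finset.sum_apply, Pi.single_apply, hiR]

end DualCode

theorem stmt_1_general {F ι : Type*} [Field F] [DecidableEq F] [Fintype ι] {r : ℕ}
    (C : Submodule F (ι → F)) (hloc : ∀ i, HasLocality C i r) :
    ∃ (l : ℕ) (h : Fin l → ι → F),
      (∀ a, h a ∈ dualCode C) ∧
      LinearIndependent F h ∧
      (∀ a, hammingNorm (h a) ≤ r + 1) ∧
      (∀ i, ∃ a, h a i ≠ 0) ∧
      l + finrank F C ≤ Fintype.card ι ∧ Fintype.card ι ≤ l * (r + 1) := by
  choose g hdual hweight hne using fun i ↦ (hloc i).exists_mem_dualCode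
  obtain ⟨l, a, hspan, hli⟩ := exists_fin_linearIndependent_comp F g
  have hcover : ∀ i, ∃ b, (g ∘ a) b i ≠ 0 := by
    intro i
    have hgi : g i ∈ span F (Set.range (g ∘ a)) := hspan ▸ subset_span ⟨i, rfl⟩
    simpa using exists_mem_apply_ne_zero_of_mem_span (LinearMap.proj i) hgi (hne i)
  refine ⟨l, g ∘ a, fun b ↦ hdual (a b), hli, fun b ↦ hweight (a b), hcover, ?_, ?_⟩
  · simpa using card_add_finrank_le_of_mem_dualCode (fun b ↦ hdual (a b)) hli
  · simpa using card_le_card_mul_of_hammingNorm_le (fun b ↦ hweight (a b)) hcover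

/-- For an `(n,k,r)` LRC with all symbol locality there exist `l ≤ n - k` linearly independent
dual codewords of Hamming weight at most `r+1` whose supports cover all coordinates;
necessarily `n ≤ l(r+1)`. -/
theorem stmt_1 {F : Type*} [Field F] [Fintype F] [DecidableEq F]
    {n k r : ℕ} (hk : 1 ≤ k) (hr : 1 ≤ r)
    (C : Submodule F (Fin n → F)) (hCk : Module.finrank F C = k)
    (hloc : ∀ i : Fin n, HasLocality C i r) :
    ∃ (l : ℕ) (h : Fin l → Fin n → F),
      (∀ a : Fin l, ∀ c ∈ C, ∑ j, c j * h a j = 0) ∧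
      LinearIndependent F h ∧
      (∀ a : Fin l, hammingNorm (h a) ≤ r + 1) ∧
      (∀ i : Fin n, ∃ a : Fin l, h a i ≠ 0) ∧
      l ≤ n - k ∧ n ≤ l * (r + 1) := by
  obtain ⟨l, h, hdual, hli, hweight, hcover, hdim, hcard⟩ := stmt_1_general C hloc
  simp only [hCk, Fintype.card_fin] at hdim hcard
  exact ⟨l, h, hdual, hli, hweight, hcover, Nat.le_sub_of_add_le hdim, hcard⟩
end

section
/- Let C be a q-ary (n,k,r) LRC with all symbol locality, where k ≥ 1 and r ≥ 1. Then k(r+1) ≤ nr, i.e., the rate satisfies k/n ≤ r/(r+1). -/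
/-!
Call a set of coordinates `U` cheap if it is determined by some set `B` of coordinates with
`|B| / |U| ≤ r / (r + 1)`. If `i ∉ U` is recovered from `R` with `|R| ≤ r`, then adding `R \ U` to
`B` determines `i` as well as `R`: `B` grows by at most `t = |R \ U|` while `U` grows by `t + 1`,
and `t / (t + 1) ≤ r / (r + 1)`. Hence a maximal cheap set contains every coordinate, and a code
determined by its restriction to `B` has dimension at most `|B|`.
-/

open Finset

/-- The closure operator on coordinates attached to a code `C` over an arbitrary alphabet: the
closure of `S` consists of the coordinates on which a codeword is determined by its restriction
to `S`. -/
def codeClosure {ι α : Type*} (C : Set (ι → α)) : ClosureOperator (Set ι) :=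
  .mk₂ (fun S ↦ {i | ∀ c ∈ C, ∀ c' ∈ C, Set.EqOn c c' S → c i = c' i})
    (fun _ _ hi _ _ _ _ hS ↦ hS hi)
    (fun _ _ hST _ hi c hc c' hc' hT ↦ hi c hc c' hc' fun _ hj ↦ hST hj c hc c' hc' hT)

theorem mem_codeClosure {ι α : Type*} {C : Set (ι → α)} {S : Set ι} {i : ι} :
    i ∈ codeClosure C S ↔ ∀ c ∈ C, ∀ c' ∈ C, Set.EqOn c c' S → c i = c' i :=
  Iff.rfl

theorem hasLocality_iff_exists_mem_codeClosure {F ι : Type*} [Field F] [Fintype ι]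
    {C : Submodule F (ι → F)} {i : ι} {r : ℕ} :
    HasLocality C i r ↔ ∃ R : Finset ι, i ∉ R ∧ #R ≤ r ∧ i ∈ codeClosure (C : Set (ι → F)) R :=
  Iff.rfl

theorem finrank_le_card_of_codeClosure_eq_univ {K ι : Type*} [Semiring K] [StrongRankCondition K]
    {C : Submodule K (ι → K)} {B : Finset ι}
    (hB : codeClosure (C : Set (ι → K)) B = Set.univ) :
    Module.finrank K C ≤ #B := by
  let restrictToB : C →ₗ[K] (B → K) := LinearMap.funLeft K K Subtype.val ∘ₗ C.subtype
  have restrictToB_injective : Function.Injective restrictToB := by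
    intro c c' h
    ext i
    have hi : i ∈ codeClosure (C : Set (ι → K)) B := hB ▸ Set.mem_univ i
    exact mem_codeClosure.1 hi c c.2 c' c'.2 fun j hj ↦ congrFun h ⟨j, hj⟩
  simpa using LinearMap.finrank_le_finrank_of_injective restrictToB_injective

section ClosureOperator

variable {ι : Type*} {cl : ClosureOperator (Set ι)} {r : ℕ}

/-- The set `U` lies in the closure of some `B` with `|B| / |U| ≤ r / (r + 1)`; the inequality is
stated with denominators cleared, so that `U = ∅` is allowed. -/
def IsCheaplySpanned (cl : ClosureOperator (Set ι)) (r : ℕ) (U : Finset ι) : Prop :=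
  ∃ B : Finset ι, (U : Set ι) ⊆ cl B ∧ #B * (r + 1) ≤ #U * r

theorem isCheaplySpanned_empty : IsCheaplySpanned cl r ∅ :=
  ⟨∅, by simp, by simp⟩

theorem IsCheaplySpanned.insert_union [DecidableEq ι] {U R : Finset ι} {i : ι}
    (hU : IsCheaplySpanned cl r U) (hiU : i ∉ U) (hiR : i ∉ R) (hR : #R ≤ r) (hi : i ∈ cl R) :
    IsCheaplySpanned cl r (insert i (U ∪ R)) := by
  obtain ⟨B, hUB, hB⟩ := hU
  refine ⟨B ∪ R \ U, ?_, ?_⟩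
  · set K : Set ι := cl ↑(B ∪ R \ U)
    have hUK : (U : Set ι) ⊆ K := hUB.trans (cl.monotone (by simp))
    have hRK : (R : Set ι) ⊆ K := by
      intro j hjR
      by_cases hjU : j ∈ U
      · exact hUK hjU
      · exact cl.le_closure _ (by simp_all)
    have hiK : i ∈ K := cl.le_closure_iff.1 hRK hi
    simpa [Set.insert_subset_iff] using ⟨hiK, hUK, hRK⟩
  · have card_extended : #(insert i (U ∪ R)) = #U + #(R \ U) + 1 := by
      rw [card_insert_of_notMem (by simp [hiU, hiR]), union_comm, ← card_sdiff_add_card,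
        add_comm #U]
    have card_new_le : #(R \ U) ≤ r := (card_le_card sdiff_subset).trans hR
    calc #(B ∪ R \ U) * (r + 1) ≤ (#B + #(R \ U)) * (r + 1) := by gcongr; exact card_union_le ..
      _ = #B * (r + 1) + (#(R \ U) * r + #(R \ U)) := by ring
      _ ≤ #U * r + (#(R \ U) * r + r) := by gcongr
      _ = #(insert i (U ∪ R)) * r := by rw [card_extended]; ring

theorem exists_closure_eq_univ_card_mul_le [Fintype ι]
    (hloc : ∀ i, ∃ R : Finset ι, i ∉ R ∧ #R ≤ r ∧ i ∈ cl R) :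
    ∃ B : Finset ι, cl B = Set.univ ∧ #B * (r + 1) ≤ Fintype.card ι * r := by
  classical
  obtain ⟨U, -, hU⟩ := Finite.exists_le_maximal (isCheaplySpanned_empty (cl := cl) (r := r))
  have hU_univ : U = univ := by
    refine eq_univ_of_forall fun i ↦ by_contra fun hiU ↦ ?_
    obtain ⟨R, hiR, hR, hi⟩ := hloc i
    have hle : insert i (U ∪ R) ≤ U :=
      hU.le_of_ge (hU.prop.insert_union hiU hiR hR hi) (by grind)
    exact hiU (hle (mem_insert_self ..))
  obtain ⟨B, hUB, hB⟩ := hU.prop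
  exact ⟨B, by simpa [hU_univ] using hUB, by simpa [hU_univ] using hB⟩

end ClosureOperator

theorem stmt_2_general {F ι : Type*} [Field F] [Fintype ι] {r : ℕ}
    (C : Submodule F (ι → F)) (hloc : ∀ i, HasLocality C i r) :
    Module.finrank F C * (r + 1) ≤ Fintype.card ι * r := by
  obtain ⟨B, hB, hcard⟩ := exists_closure_eq_univ_card_mul_le
    fun i ↦ hasLocality_iff_exists_mem_codeClosure.1 (hloc i)
  exact (Nat.mul_le_mul_right _ (finrank_le_card_of_codeClosure_eq_univ hB)).trans hcard

/-- Rate bound for LRCs with all symbol locality: `k(r+1) ≤ nr`, i.e. `k/n ≤ r/(r+1)`. -/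
theorem stmt_2 {F : Type*} [Field F] [Fintype F]
    {n k r : ℕ} (hk : 1 ≤ k) (hr : 1 ≤ r)
    (C : Submodule F (Fin n → F)) (hCk : Module.finrank F C = k)
    (hloc : ∀ i : Fin n, HasLocality C i r) :
    k * (r + 1) ≤ n * r := by
  simpa [hCk] using stmt_2_general C hloc
end

section
/- (Singleton-like bound) Let C be a q-ary (n,k,r) LRC with all symbol locality, where k ≥ 1 and r ≥ 1, and let d be its minimum distance. Then d ≤ n − k − ⌈k/r⌉ + 2. -/
/-- The minimum distance of a linear code: the least Hamming weight of a nonzero codeword. -/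
noncomputable def minDist {F ι : Type*} [Field F] [Fintype ι] [DecidableEq F]
    (C : Submodule F (ι → F)) : ℕ :=
  sInf {w | ∃ c ∈ C, c ≠ 0 ∧ hammingNorm c = w}

/-!
Write `C(S)` for the codewords of `C` that vanish on `S`. By rank-nullity `dim C(S) + |S|` does not
decrease when `S` grows. A nonzero word of `C(S)` has weight at most `n - |S|`, so adding
`dim C(S) - 1` coordinates to `S`, which keeps `C(S)` nonzero, gives `d + |S| + dim C(S) ≤ n + 1`.
For `S = ∅` this is the classical Singleton bound.

Locality improves it: if `R` recovers a coordinate `i ∉ S`, then adding `R ∪ {i}` to `S` costs at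
most `|R| ≤ r` dimensions, because `i` comes for free, so `dim C(S) + |S|` increases by at least
one. Starting from `S = ∅`, this can be done `⌈k/r⌉ - 1` times before `C(S)` may become trivial.
-/

section

variable {F ι : Type*} [Field F] (C : Submodule F (ι → F))

/-- The subcode of the codewords of `C` that vanish on `S`, i.e. the code `C` shortened on `S`, but
with the coordinates in `S` kept (as zeros). -/
def vanishingSubcode (S : Finset ι) : Submodule F (ι → F) :=
  C ⊓ LinearMap.ker (LinearMap.funLeft F F ((↑) : S → ι))

variable {C}

lemma mem_vanishingSubcode {S : Finset ι} {c : ι → F} :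
    c ∈ vanishingSubcode C S ↔ c ∈ C ∧ ∀ j ∈ S, c j = 0 := by
  simp [vanishingSubcode, funext_iff, LinearMap.funLeft_apply]

variable (C)

lemma vanishingSubcode_empty : vanishingSubcode C ∅ = C := by
  ext; simp [mem_vanishingSubcode]

lemma vanishingSubcode_univ [Fintype ι] : vanishingSubcode C Finset.univ = ⊥ := by
  rw [Submodule.eq_bot_iff]
  exact fun c hc => funext fun j => (mem_vanishingSubcode.mp hc).2 j (Finset.mem_univ j)

lemma vanishingSubcode_union [DecidableEq ι] (S T : Finset ι) :
    vanishingSubcode C (S ∪ T) = vanishingSubcode (vanishingSubcode C S) T := by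
  ext c
  simp only [mem_vanishingSubcode, Finset.forall_mem_union, and_assoc]

section Finite

variable [Finite ι]

lemma finrank_le_finrank_vanishingSubcode_add_card (S : Finset ι) :
    Module.finrank F C ≤ Module.finrank F (vanishingSubcode C S) + S.card := by
  let restriction := (LinearMap.funLeft F F ((↑) : S → ι)).domRestrict C
  have hker : Module.finrank F (LinearMap.ker restriction) =
      Module.finrank F (vanishingSubcode C S) := by
    rw [LinearMap.ker_domRestrict, ← Submodule.finrank_map_subtype_eq,
      Submodule.map_comap_subtype, vanishingSubcode]
  have hrange : Module.finrank F (LinearMap.range restriction) ≤ S.card := by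
    simpa using Submodule.finrank_le (LinearMap.range restriction)
  have := LinearMap.finrank_range_add_finrank_ker restriction
  omega

lemma finrank_vanishingSubcode_le_union_add_card [DecidableEq ι] (S T : Finset ι) :
    Module.finrank F (vanishingSubcode C S) ≤
      Module.finrank F (vanishingSubcode C (S ∪ T)) + T.card := by
  rw [vanishingSubcode_union]
  exact finrank_le_finrank_vanishingSubcode_add_card _ T

lemma finrank_vanishingSubcode_add_card_mono {S T : Finset ι} (hST : S ⊆ T) :
    Module.finrank F (vanishingSubcode C S) + S.card ≤
      Module.finrank F (vanishingSubcode C T) + T.card := by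
  classical
  have hfinrank := finrank_vanishingSubcode_le_union_add_card C S (T \ S)
  rw [Finset.union_sdiff_of_subset hST] at hfinrank
  have hcard := Finset.card_sdiff_add_card_eq_card hST
  omega

end Finite

section Fintype

variable {C} [Fintype ι]

lemma minDist_add_card_le_of_vanishingSubcode_ne_bot [DecidableEq F] {S : Finset ι}
    (hS : vanishingSubcode C S ≠ ⊥) : minDist C + S.card ≤ Fintype.card ι := by
  classical
  obtain ⟨c, hc, hc0⟩ := Submodule.exists_mem_ne_zero_of_ne_bot hS
  obtain ⟨hcC, hcS⟩ := mem_vanishingSubcode.mp hc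
  have hsupport : ({j | c j ≠ 0} : Finset ι) ⊆ Sᶜ := fun j hj =>
    Finset.mem_compl.mpr fun hjS => (Finset.mem_filter.mp hj).2 (hcS j hjS)
  calc minDist C + S.card ≤ hammingNorm c + S.card := by
        gcongr
        exact Nat.sInf_le ⟨c, hcC, hc0, rfl⟩
    _ ≤ Sᶜ.card + S.card := by
        gcongr
        exact Finset.card_le_card hsupport
    _ = Fintype.card ι := Finset.card_compl_add_card S

lemma minDist_add_card_add_finrank_vanishingSubcode_le [DecidableEq F] {S : Finset ι}
    (hS : vanishingSubcode C S ≠ ⊥) :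
    minDist C + S.card + Module.finrank F (vanishingSubcode C S) ≤ Fintype.card ι + 1 := by
  have hpos := Submodule.one_le_finrank_iff.mpr hS
  have huniv : Module.finrank F (vanishingSubcode C S) + S.card ≤ Fintype.card ι := by
    have hmono := finrank_vanishingSubcode_add_card_mono C S.subset_univ
    rwa [vanishingSubcode_univ, finrank_bot, zero_add, Finset.card_univ] at hmono
  obtain ⟨T, hST, hTcard⟩ := Finset.exists_superset_card_eq (s := S)
    (n := S.card + Module.finrank F (vanishingSubcode C S) - 1) (by omega) (by omega)
  have hT : vanishingSubcode C T ≠ ⊥ := by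
    have hmono := finrank_vanishingSubcode_add_card_mono C hST
    exact Submodule.one_le_finrank_iff.mp (by omega)
  have := minDist_add_card_le_of_vanishingSubcode_ne_bot hT
  omega

lemma HasLocality.exists_recovery_set {i : ι} {r : ℕ} (hi : HasLocality C i r) :
    ∃ R : Finset ι, i ∉ R ∧ R.card ≤ r ∧ ∀ c ∈ vanishingSubcode C R, c i = 0 := by
  obtain ⟨R, hiR, hRr, hR⟩ := hi
  refine ⟨R, hiR, hRr, fun c hc => ?_⟩
  obtain ⟨hcC, hcR⟩ := mem_vanishingSubcode.mp hc
  exact hR c hcC 0 C.zero_mem hcR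

lemma HasLocality.exists_finrank_vanishingSubcode_add_card_lt {i : ι} {r : ℕ}
    (hi : HasLocality C i r) {S : Finset ι} (hiS : i ∉ S) :
    ∃ T : Finset ι,
      Module.finrank F (vanishingSubcode C S) ≤ Module.finrank F (vanishingSubcode C T) + r ∧
      Module.finrank F (vanishingSubcode C S) + S.card <
        Module.finrank F (vanishingSubcode C T) + T.card := by
  classical
  obtain ⟨R, hiR, hRr, hR⟩ := hi.exists_recovery_set
  have hfree : vanishingSubcode C (insert i (S ∪ R)) = vanishingSubcode C (S ∪ R) := by
    ext c
    have hci : c ∈ C → (∀ j ∈ R, c j = 0) → c i = 0 := fun hcC hcR =>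
      hR c (mem_vanishingSubcode.mpr ⟨hcC, hcR⟩)
    simp only [mem_vanishingSubcode, Finset.forall_mem_insert, Finset.forall_mem_union]
    tauto
  refine ⟨insert i (S ∪ R), ?_, ?_⟩ <;> rw [hfree]
  · exact (finrank_vanishingSubcode_le_union_add_card C S R).trans (by gcongr)
  · rw [Finset.card_insert_of_notMem (by simp [hiS, hiR])]
    exact Nat.lt_succ_of_le
      (finrank_vanishingSubcode_add_card_mono C Finset.subset_union_left)

lemma exists_finrank_add_le_finrank_vanishingSubcode_add_card {r : ℕ}
    (hloc : ∀ i, HasLocality C i r) (m : ℕ) (hm : m * r < Module.finrank F C) :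
    ∃ S : Finset ι, Module.finrank F C ≤ Module.finrank F (vanishingSubcode C S) + m * r ∧
      Module.finrank F C + m ≤ Module.finrank F (vanishingSubcode C S) + S.card := by
  induction m with
  | zero => exact ⟨∅, by rw [vanishingSubcode_empty]; simp⟩
  | succ m ih =>
    rw [Nat.succ_mul] at hm
    obtain ⟨S, hfinrank, hsum⟩ := ih (by omega)
    obtain ⟨i, hiS⟩ : ∃ i, i ∉ S := by
      by_contra! hS
      rw [Finset.eq_univ_iff_forall.mpr hS, vanishingSubcode_univ, finrank_bot] at hfinrank
      omega
    obtain ⟨T, hfinrank', hsum'⟩ := (hloc i).exists_finrank_vanishingSubcode_add_card_lt hiS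
    exact ⟨T, by rw [Nat.succ_mul]; omega, by omega⟩

lemma minDist_add_finrank_add_le [DecidableEq F] {m r : ℕ} (hloc : ∀ i, HasLocality C i r)
    (hm : m * r < Module.finrank F C) :
    minDist C + Module.finrank F C + m ≤ Fintype.card ι + 1 := by
  obtain ⟨S, hfinrank, hsum⟩ :=
    exists_finrank_add_le_finrank_vanishingSubcode_add_card hloc m hm
  have hS : vanishingSubcode C S ≠ ⊥ := Submodule.one_le_finrank_iff.mp (by omega)
  have := minDist_add_card_add_finrank_vanishingSubcode_le hS
  omega

end Fintype

end

lemma exists_ceil_div_eq_add_one {k r : ℕ} (hk : 1 ≤ k) (hr : 1 ≤ r) :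
    ∃ m : ℕ, m * r < k ∧ ⌈(k : ℚ) / r⌉ = m + 1 := by
  have hr' : (0 : ℚ) < r := by exact_mod_cast hr
  have hpos : 0 < (k : ℚ) / r := div_pos (by exact_mod_cast hk) hr'
  obtain ⟨m, hm⟩ := Nat.exists_eq_add_one.mpr (Nat.ceil_pos.mpr hpos)
  refine ⟨m, ?_, ?_⟩
  · have hlt : (m : ℚ) < k / r := Nat.lt_ceil.mp (by omega)
    exact_mod_cast (lt_div_iff₀ hr').mp hlt
  · rw [← Int.natCast_ceil_eq_ceil hpos.le, hm, Nat.cast_add_one]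

theorem stmt_3_general {F ι : Type*} [Field F] [DecidableEq F] [Fintype ι] {r : ℕ} (hr : 1 ≤ r)
    (C : Submodule F (ι → F)) (hC : 1 ≤ Module.finrank F C) (hloc : ∀ i, HasLocality C i r) :
    (minDist C : ℤ) ≤
      (Fintype.card ι : ℤ) - Module.finrank F C - ⌈(Module.finrank F C : ℚ) / r⌉ + 2 := by
  obtain ⟨m, hm, hceil⟩ := exists_ceil_div_eq_add_one hC hr
  have := minDist_add_finrank_add_le hloc hm
  omega

/-- Singleton-like bound: for an `(n,k,r)` LRC with all symbol locality,
`d ≤ n - k - ⌈k/r⌉ + 2`. -/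
theorem stmt_3 {F : Type*} [Field F] [Fintype F] [DecidableEq F]
    {n k r : ℕ} (hk : 1 ≤ k) (hr : 1 ≤ r)
    (C : Submodule F (Fin n → F)) (hCk : Module.finrank F C = k)
    (hloc : ∀ i : Fin n, HasLocality C i r) :
    (minDist C : ℤ) ≤ (n : ℤ) - k - ⌈(k : ℚ) / r⌉ + 2 := by
  subst hCk
  simpa only [Fintype.card_fin] using stmt_3_general hr C hk hloc
end

section
/- Let C be a q-ary (n,k,r) LRC with all symbol locality, where k ≥ 1 and r ≥ 1, and let d be its minimum distance. Then for every integer t with 1 ≤ t ≤ ⌈k/r⌉ − 1 there exists a q-ary linear code of length n − t(r+1) whose dimension is at least k − tr and whose minimum distance is at least d. -/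
/-!
Shorten `C` on a set of exactly `t * (r + 1)` coordinates, i.e. keep the codewords vanishing there
and delete those coordinates: weights do not change, and each coordinate costs at most one
dimension. The set is built greedily in `t` rounds. Each round takes a coordinate `i` on which the
current subcode is not identically zero, together with a recovery set `R` of `i`. Once a codeword
vanishes on `R` it vanishes at `i`, so `i` is free, and a round of at most `r + 1` new coordinates
loses one dimension less than the number of coordinates it adds. As long as `t * r < k` the subcode
stays nonzero until the last round. Finally the set is padded to size `t * (r + 1)`, at a cost of at
most one dimension per coordinate.
-/

section LinearAlgebra

variable {F V W : Type*} [DivisionRing F] [AddCommGroup V] [Module F V]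
  [AddCommGroup W] [Module F W]

theorem finrank_le_finrank_inf_ker_add_finrank [FiniteDimensional F W] (S : Submodule F V)
    [FiniteDimensional F S] (f : V →ₗ[F] W) :
    Module.finrank F S ≤ Module.finrank F ↥(S ⊓ LinearMap.ker f) + Module.finrank F W := by
  have hker : Module.finrank F (LinearMap.ker (f.domRestrict S)) =
      Module.finrank F ↥(S ⊓ LinearMap.ker f) := by
    rw [LinearMap.ker_domRestrict, ← Submodule.finrank_map_subtype_eq,
      Submodule.map_comap_subtype]
  have hrange := Submodule.finrank_le (LinearMap.range (f.domRestrict S))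
  have hrank_nullity := LinearMap.finrank_range_add_finrank_ker (f.domRestrict S)
  omega

end LinearAlgebra

section Embedding

variable {κ ι : Type*} [Fintype κ] [Fintype ι]

theorem exists_embedding_range_eq_compl (J : Finset ι)
    (hκ : Fintype.card κ = Fintype.card ι - J.card) :
    ∃ f : κ ↪ ι, Set.range f = (J : Set ι)ᶜ := by
  classical
  have e : κ ≃ ↥Jᶜ := Fintype.equivOfCardEq (by simpa [Finset.card_compl] using hκ)
  refine ⟨e.toEmbedding.trans (Function.Embedding.subtype _), ?_⟩
  rw [Function.Embedding.coe_trans, Equiv.coe_toEmbedding, e.surjective.range_comp]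
  ext i
  simp

theorem hammingNorm_extend_zero {M : Type*} [Zero M] [DecidableEq M] {f : κ → ι}
    (hf : Function.Injective f) (x : κ → M) :
    hammingNorm (Function.extend f x 0) = hammingNorm x := by
  classical
  have hsupport : ({i | Function.extend f x 0 i ≠ 0} : Finset ι) =
      ({a | x a ≠ 0} : Finset κ).map ⟨f, hf⟩ :=
    Finset.coe_injective (by simpa [Function.support] using Function.support_extend_zero hf)
  simp only [hammingNorm, hsupport, Finset.card_map]

end Embedding

section Codes

variable {F ι κ : Type*} [Field F]

theorem minDist_le_hammingNorm [Fintype ι] [DecidableEq F] {C : Submodule F (ι → F)} {c : ι → F}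
    (hc : c ∈ C) (hc0 : c ≠ 0) : minDist C ≤ hammingNorm c :=
  Nat.sInf_le ⟨c, hc, hc0, rfl⟩

/-- The subcode of the codewords of `C` that vanish on `I`, still of full length: the coordinates
in `I` are not deleted. -/
def vanishingOn (C : Submodule F (ι → F)) (I : Finset ι) : Submodule F (ι → F) :=
  C ⊓ Submodule.pi I fun _ ↦ ⊥

theorem mem_vanishingOn {C : Submodule F (ι → F)} {I : Finset ι} {c : ι → F} :
    c ∈ vanishingOn C I ↔ c ∈ C ∧ ∀ i ∈ I, c i = 0 := by
  simp [vanishingOn]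

theorem vanishingOn_empty (C : Submodule F (ι → F)) : vanishingOn C ∅ = C := by
  ext c
  simp [mem_vanishingOn]

theorem vanishingOn_univ [Fintype ι] (C : Submodule F (ι → F)) : vanishingOn C Finset.univ = ⊥ := by
  rw [eq_bot_iff]
  exact fun c hc ↦ funext fun i ↦ (mem_vanishingOn.mp hc).2 i (Finset.mem_univ i)

theorem finrank_vanishingOn_add_card_le_of_subset [Finite ι] (C : Submodule F (ι → F))
    {I J : Finset ι} (hIJ : I ⊆ J) :
    Module.finrank F (vanishingOn C I) + I.card ≤
      Module.finrank F (vanishingOn C J) + J.card := by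
  classical
  have hinf : vanishingOn C I ⊓
      LinearMap.ker (LinearMap.funLeft F F ((↑) : ↥(J \ I) → ι)) = vanishingOn C J := by
    ext c
    simp only [Submodule.mem_inf, mem_vanishingOn, LinearMap.mem_ker, funext_iff, Subtype.forall,
      LinearMap.funLeft_apply, Pi.zero_apply, Finset.mem_sdiff]
    grind
  have hle := finrank_le_finrank_inf_ker_add_finrank (vanishingOn C I)
    (LinearMap.funLeft F F ((↑) : ↥(J \ I) → ι))
  rw [hinf, Module.finrank_fintype_fun_eq_card, Fintype.card_coe] at hle
  have hcard := Finset.card_sdiff_add_card_eq_card hIJ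
  omega

section Locality

variable [Fintype ι] {C : Submodule F (ι → F)} {r : ℕ}

theorem HasLocality.exists_vanishingOn_insert_eq [DecidableEq ι] {i : ι} (hi : HasLocality C i r) :
    ∃ R : Finset ι, i ∉ R ∧ R.card ≤ r ∧
      ∀ J, R ⊆ J → vanishingOn C (insert i J) = vanishingOn C J := by
  obtain ⟨R, hiR, hR, hdet⟩ := hi
  refine ⟨R, hiR, hR, fun J hRJ ↦ ?_⟩
  ext c
  simp only [mem_vanishingOn, Finset.forall_mem_insert]
  refine and_congr_right fun hc ↦ and_iff_right_of_imp fun hcJ ↦ ?_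
  exact hdet c hc 0 C.zero_mem fun j hj ↦ hcJ j (hRJ hj)

theorem exists_finrank_vanishingOn_add_card_lt (hloc : ∀ i, HasLocality C i r) {I : Finset ι}
    (hI : vanishingOn C I ≠ ⊥) :
    ∃ J : Finset ι, J.card ≤ I.card + (r + 1) ∧
      Module.finrank F (vanishingOn C I) + I.card <
        Module.finrank F (vanishingOn C J) + J.card := by
  classical
  obtain ⟨c, hc, hc0⟩ := Submodule.exists_mem_ne_zero_of_ne_bot hI
  obtain ⟨i, hci⟩ := Function.ne_iff.mp hc0
  obtain ⟨R, hiR, hR, hfree⟩ := (hloc i).exists_vanishingOn_insert_eq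
  have hiI : i ∉ I := fun hi ↦ hci ((mem_vanishingOn.mp hc).2 i hi)
  have hcard : (insert i (I ∪ R)).card = (I ∪ R).card + 1 :=
    Finset.card_insert_of_notMem (by simp [hiI, hiR])
  refine ⟨insert i (I ∪ R), ?_, ?_⟩
  · have hunion := Finset.card_union_le I R
    omega
  · have hmono := finrank_vanishingOn_add_card_le_of_subset C (Finset.subset_union_left : I ⊆ I ∪ R)
    rw [hfree _ Finset.subset_union_right, hcard]
    exact Nat.lt_succ_of_le hmono

theorem exists_card_le_and_finrank_add_le_finrank_vanishingOn_add_card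
    (hloc : ∀ i, HasLocality C i r) (t : ℕ) (ht : t * r < Module.finrank F C) :
    ∃ I : Finset ι, I.card ≤ t * (r + 1) ∧
      Module.finrank F C + t ≤ Module.finrank F (vanishingOn C I) + I.card := by
  induction t with
  | zero => exact ⟨∅, by simp, by rw [vanishingOn_empty, Finset.card_empty]⟩
  | succ t ih =>
    rw [Nat.succ_mul] at ht
    obtain ⟨I, hcard, hrank⟩ := ih (by omega)
    have hI : vanishingOn C I ≠ ⊥ := by
      intro hbot
      rw [hbot, finrank_bot] at hrank
      rw [Nat.mul_succ] at hcard
      omega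
    obtain ⟨J, hJcard, hJrank⟩ := exists_finrank_vanishingOn_add_card_lt hloc hI
    exact ⟨J, by rw [Nat.succ_mul]; omega, by omega⟩

theorem exists_card_eq_and_finrank_le_finrank_vanishingOn_add
    (hloc : ∀ i, HasLocality C i r) {t : ℕ} (ht : t * r < Module.finrank F C) :
    ∃ J : Finset ι, J.card = t * (r + 1) ∧
      Module.finrank F C ≤ Module.finrank F (vanishingOn C J) + t * r := by
  obtain ⟨I, hIcard, hIrank⟩ :=
    exists_card_le_and_finrank_add_le_finrank_vanishingOn_add_card hloc t ht
  have hlength : t * (r + 1) ≤ Fintype.card ι := by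
    have hmono := finrank_vanishingOn_add_card_le_of_subset C (Finset.subset_univ I)
    rw [vanishingOn_univ, finrank_bot, Finset.card_univ] at hmono
    rw [Nat.mul_succ]
    omega
  obtain ⟨J, hIJ, hJcard⟩ := Finset.exists_superset_card_eq hIcard hlength
  have hmono := finrank_vanishingOn_add_card_le_of_subset C hIJ
  refine ⟨J, hJcard, ?_⟩
  rw [hJcard, Nat.mul_succ] at hmono
  omega

end Locality

/-- The shortening of `C` to the coordinates in the range of `f`, reindexed by `κ`: codewords of `C`
vanishing outside the range of `f`, with the coordinates outside that range deleted. Encoded as the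
words whose extension by zero lies in `C`. -/
noncomputable def shortening (C : Submodule F (ι → F)) (f : κ ↪ ι) : Submodule F (κ → F) :=
  C.comap (Function.ExtendByZero.linearMap F f)

theorem minDist_le_hammingNorm_of_mem_shortening [Fintype ι] [Fintype κ] [DecidableEq F]
    {C : Submodule F (ι → F)} {f : κ ↪ ι} {x : κ → F} (hx : x ∈ shortening C f) (hx0 : x ≠ 0) :
    minDist C ≤ hammingNorm x := by
  rw [← hammingNorm_extend_zero f.injective]
  refine minDist_le_hammingNorm hx ?_
  rwa [← hammingNorm_ne_zero_iff, hammingNorm_extend_zero f.injective, hammingNorm_ne_zero_iff]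

theorem map_extendByZero_shortening (C : Submodule F (ι → F)) {f : κ ↪ ι} {J : Finset ι}
    (hf : Set.range f = (J : Set ι)ᶜ) :
    (shortening C f).map (Function.ExtendByZero.linearMap F f) = vanishingOn C J := by
  have hmem {i : ι} : i ∈ J ↔ i ∉ Set.range f := by simp [hf]
  ext c
  simp only [Submodule.mem_map, shortening, Submodule.mem_comap, mem_vanishingOn]
  constructor
  · rintro ⟨x, hx, rfl⟩
    exact ⟨hx, fun i hi ↦ Function.extend_apply' _ _ _ (hmem.mp hi)⟩
  · rintro ⟨hc, hcJ⟩
    have hextend : Function.ExtendByZero.linearMap F f (c ∘ f) = c := by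
      ext i
      by_cases hi : i ∈ Set.range f
      · obtain ⟨a, rfl⟩ := hi
        exact f.injective.extend_apply _ _ a
      · exact (Function.extend_apply' _ _ _ hi).trans (hcJ i (hmem.mpr hi)).symm
    exact ⟨c ∘ f, hextend.symm ▸ hc, hextend⟩

theorem finrank_shortening (C : Submodule F (ι → F)) {f : κ ↪ ι} {J : Finset ι}
    (hf : Set.range f = (J : Set ι)ᶜ) :
    Module.finrank F (shortening C f) = Module.finrank F (vanishingOn C J) := by
  rw [← map_extendByZero_shortening C hf]
  have hinj : Function.Injective (Function.ExtendByZero.linearMap F f) :=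
    Function.extend_injective f.injective (0 : ι → F)
  exact (Submodule.equivMapOfInjective _ hinj _).finrank_eq

theorem stmt_4_general [Fintype ι] [Fintype κ] [DecidableEq F] {C : Submodule F (ι → F)} {r t : ℕ}
    (hloc : ∀ i, HasLocality C i r) (ht : t * r < Module.finrank F C)
    (hκ : Fintype.card κ = Fintype.card ι - t * (r + 1)) :
    ∃ C' : Submodule F (κ → F),
      Module.finrank F C - t * r ≤ Module.finrank F C' ∧
      ∀ c ∈ C', c ≠ 0 → minDist C ≤ hammingNorm c := by
  obtain ⟨J, hJcard, hJrank⟩ := exists_card_eq_and_finrank_le_finrank_vanishingOn_add hloc ht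
  obtain ⟨f, hf⟩ := exists_embedding_range_eq_compl (κ := κ) J (by rw [hκ, hJcard])
  refine ⟨shortening C f, ?_, fun c ↦ minDist_le_hammingNorm_of_mem_shortening⟩
  rw [finrank_shortening C hf]
  omega

end Codes

theorem mul_lt_of_le_ceil_div_sub_one {k r t : ℕ} (hr : 1 ≤ r)
    (ht : (t : ℤ) ≤ ⌈(k : ℚ) / r⌉ - 1) : t * r < k := by
  have hlt : (t : ℚ) < k / r := by exact_mod_cast Int.lt_ceil.mp (Int.le_sub_one_iff.mp ht)
  exact_mod_cast (lt_div_iff₀ (by exact_mod_cast hr)).mp hlt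

/-- For an `(n,k,r)` LRC with all symbol locality and minimum distance `d`, for every `t` with
`1 ≤ t ≤ ⌈k/r⌉ - 1` there exists a `q`-ary linear code of length `n - t(r+1)`, dimension at
least `k - tr`, and minimum distance at least `d`. -/
theorem stmt_4 {F : Type*} [Field F] [Fintype F] [DecidableEq F]
    {n k r : ℕ} (hk : 1 ≤ k) (hr : 1 ≤ r)
    (C : Submodule F (Fin n → F)) (hCk : Module.finrank F C = k)
    (hloc : ∀ i : Fin n, HasLocality C i r)
    (t : ℕ) (ht1 : 1 ≤ t) (ht2 : (t : ℤ) ≤ ⌈(k : ℚ) / r⌉ - 1) :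
    ∃ C' : Submodule F (Fin (n - t * (r + 1)) → F),
      k - t * r ≤ Module.finrank F C' ∧
      ∀ c ∈ C', c ≠ 0 → minDist C ≤ hammingNorm c := by
  subst hCk
  exact stmt_4_general hloc (mul_lt_of_le_ceil_div_sub_one hr ht2) (by simp)
end

section
/- Let C be a q-ary (n,k,r) LRC with all symbol locality and minimum distance d, with 1 ≤ r < k, r dividing k, and d = n − k − k/r + 2. Then (r+1) divides n. -/
/-!
Let `ρ S` be the dimension of the restriction of `C` to the coordinates `S`, and let
`ν S = |S| - ρ S` be the nullity, which is monotone and supermodular. With `k = m * r`, the distance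
hypothesis says that every `S` with `ρ S < k` has at most `k + m - 2` elements; enlarging such a set
to a maximal one shows that `ν S ≥ m` forces `ρ S ≥ k`.

A coordinate together with its repair set forms a repair group, of size at most `r + 1`. Adding to
`S` the repair group of a coordinate outside `S` raises `ν` by at least `1` and `ρ` by at most `r`,
so descending from `j = m` one gets `ρ S ≥ j * r`, hence `|S| ≥ j * (r + 1)`, whenever
`ν S ≥ j` and `j ≤ m`. The case `j = 1` shows that repair groups have exactly `r + 1` elements. Two
distinct ones that met would have a union of nullity at least `2` with at most `2 * r + 1` elements,
contradicting the case `j = 2`. So the repair groups partition the coordinates.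
-/

open Finset

theorem dvd_card_of_forall_mem_eq {α : Type*} [Fintype α] {d : ℕ} {L : α → Finset α}
    (hmem : ∀ i, i ∈ L i) (hcard : ∀ i, #(L i) = d) (heq : ∀ i j, j ∈ L i → L j = L i) :
    d ∣ Fintype.card α := by
  classical
  rw [← card_univ, card_eq_sum_card_image L]
  refine dvd_sum fun b hb ↦ ?_
  obtain ⟨i, -, rfl⟩ := mem_image.mp hb
  have fiber_eq : ({j | L j = L i} : Finset α) = L i := by
    ext j
    simpa using ⟨fun h ↦ h ▸ hmem j, heq i j⟩
  rw [fiber_eq, hcard]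

section Rank

variable {α : Type*} [DecidableEq α] {ρ : Finset α → ℕ} {S T L L' : Finset α} {i i' : α} {m r : ℕ}

/-- A submodular set function bounded by the cardinality, such as the rank function of a matroid
or the dimension of the restrictions of a linear code. -/
structure IsSubmodularRank (ρ : Finset α → ℕ) : Prop where
  le_card (S : Finset α) : ρ S ≤ #S
  union_add_inter_le (S T : Finset α) : ρ (S ∪ T) + ρ (S ∩ T) ≤ ρ S + ρ T

/-- The nullity of `S` with respect to a rank function `ρ`; the subtraction does not truncate when
`ρ` is bounded by the cardinality. -/
def nullity (ρ : Finset α → ℕ) (S : Finset α) : ℕ := #S - ρ S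

/-- `L` is a repair group for `i`: it has at most `r + 1` elements, one of which is `i`, and `i`
depends on the other ones. In coding terms, `L` consists of `i` and a repair set of size `≤ r`. -/
structure IsRepairGroup (ρ : Finset α → ℕ) (r : ℕ) (i : α) (L : Finset α) : Prop where
  mem : i ∈ L
  card_le : #L ≤ r + 1
  rank_erase : ρ (L.erase i) = ρ L

namespace IsSubmodularRank

theorem nullity_add_rank (hρ : IsSubmodularRank ρ) (S : Finset α) : nullity ρ S + ρ S = #S :=
  Nat.sub_add_cancel (hρ.le_card S)

theorem nullity_add_nullity_le (hρ : IsSubmodularRank ρ) (S T : Finset α) :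
    nullity ρ S + nullity ρ T ≤ nullity ρ (S ∪ T) + nullity ρ (S ∩ T) := by
  have := hρ.union_add_inter_le S T
  have := card_union_add_card_inter S T
  have := hρ.nullity_add_rank
  grind

theorem nullity_mono (hρ : IsSubmodularRank ρ) (h : S ⊆ T) : nullity ρ S ≤ nullity ρ T := by
  have := hρ.nullity_add_nullity_le S (T \ S)
  rw [union_sdiff_of_subset h, inter_sdiff_self] at this
  have : nullity ρ ∅ = 0 := Nat.zero_sub _
  lia

theorem rank_union_le (hρ : IsSubmodularRank ρ) (S T : Finset α) : ρ (S ∪ T) ≤ ρ S + ρ T :=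
  (Nat.le_add_right _ _).trans (hρ.union_add_inter_le S T)

theorem rank_insert_le (hρ : IsSubmodularRank ρ) (i : α) (S : Finset α) :
    ρ (insert i S) ≤ ρ S + 1 := by
  have singleton_le : ρ {i} ≤ 1 := hρ.le_card {i}
  grind [hρ.rank_union_le S {i}]

theorem nullity_erase_add_one (hρ : IsSubmodularRank ρ) (hL : IsRepairGroup ρ r i L) :
    nullity ρ (L.erase i) + 1 = nullity ρ L := by
  have := hρ.nullity_add_rank L
  have := hρ.nullity_add_rank (L.erase i)
  have := card_erase_add_one hL.mem
  have := hL.rank_erase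
  lia

theorem rank_repairGroup_le (hρ : IsSubmodularRank ρ) (hL : IsRepairGroup ρ r i L) : ρ L ≤ r := by
  rw [← hL.rank_erase]
  refine (hρ.le_card _).trans ?_
  grind [card_erase_of_mem hL.mem, hL.card_le]

theorem nullity_lt_nullity_union (hρ : IsSubmodularRank ρ) (hL : IsRepairGroup ρ r i L)
    (hi : i ∉ S) : nullity ρ S < nullity ρ (S ∪ L) := by
  have inter_subset : S ∩ L ⊆ L.erase i := by grind
  have := hρ.nullity_mono inter_subset
  have := hρ.nullity_erase_add_one hL
  have := hρ.nullity_add_nullity_le S L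
  lia

variable [Fintype α]

theorem exists_superset_rank_add_one_eq (hρ : IsSubmodularRank ρ) (hS : ρ S < ρ univ) :
    ∃ M, S ⊆ M ∧ ρ M + 1 = ρ univ := by
  obtain ⟨M, hSM, hM⟩ := (Set.toFinite {M | ρ M < ρ univ}).exists_le_maximal hS
  obtain ⟨x, hx⟩ : ∃ x, x ∉ M := by
    by_contra! h
    exact hM.prop.ne (congrArg ρ (eq_univ_of_forall h))
  have rank_insert : ρ univ ≤ ρ (insert x M) :=
    not_lt.mp fun h ↦ hx (hM.le_of_ge h (subset_insert x M) (mem_insert_self x M))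
  exact ⟨M, hSM, le_antisymm hM.prop (rank_insert.trans (hρ.rank_insert_le x M))⟩

theorem rank_univ_le_of_le_nullity (hρ : IsSubmodularRank ρ)
    (card_le : ∀ T, ρ T < ρ univ → #T + 2 ≤ ρ univ + m) (hS : m ≤ nullity ρ S) :
    ρ univ ≤ ρ S := by
  by_contra! h
  obtain ⟨M, hSM, hM⟩ := hρ.exists_superset_rank_add_one_eq h
  have := card_le M (by lia)
  have := hρ.nullity_mono hSM
  have := hρ.nullity_add_rank M
  lia

end IsSubmodularRank

variable [Fintype α]

/-- The rank-function counterpart of a locally repairable code of dimension `m * r` and locality `r`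
that attains the Singleton-like bound. A set of rank less than `m * r` is one on which some nonzero
codeword vanishes, so `card_add_two_le` is the lower bound on the minimum distance. -/
structure IsOptimalLRCRank (ρ : Finset α → ℕ) (m r : ℕ) : Prop extends IsSubmodularRank ρ where
  rank_univ : ρ univ = m * r
  card_add_two_le (S : Finset α) : ρ S < m * r → #S + 2 ≤ m * r + m
  exists_isRepairGroup (i : α) : ∃ L, IsRepairGroup ρ r i L

namespace IsOptimalLRCRank

theorem mul_le_rank (hρ : IsOptimalLRCRank ρ m r) {j : ℕ} (hj : j ≤ m) (hS : j ≤ nullity ρ S) :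
    j * r ≤ ρ S := by
  induction hj using Nat.decreasingInduction generalizing S with
  | self =>
    rw [← hρ.rank_univ]
    exact hρ.rank_univ_le_of_le_nullity (by simpa only [hρ.rank_univ] using hρ.card_add_two_le) hS
  | of_succ j hj ih =>
    rcases eq_or_ne S univ with rfl | hne
    · rw [hρ.rank_univ]
      gcongr
    · obtain ⟨i, hi⟩ : ∃ i, i ∉ S := by simpa [eq_univ_iff_forall] using hne
      obtain ⟨L, hL⟩ := hρ.exists_isRepairGroup i
      have rank_union : (j + 1) * r ≤ ρ (S ∪ L) :=
        ih (hS.trans_lt (hρ.nullity_lt_nullity_union hL hi))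
      have := hρ.rank_union_le S L
      have := hρ.rank_repairGroup_le hL
      lia

theorem mul_add_one_le_card (hρ : IsOptimalLRCRank ρ m r) {j : ℕ} (hj : j ≤ m)
    (hS : j ≤ nullity ρ S) : j * (r + 1) ≤ #S := by
  have := hρ.mul_le_rank hj hS
  have := hρ.nullity_add_rank S
  lia

theorem card_repairGroup (hρ : IsOptimalLRCRank ρ m r) (hm : 1 ≤ m) (hL : IsRepairGroup ρ r i L) :
    #L = r + 1 := by
  have one_le_nullity : 1 ≤ nullity ρ L := by
    rw [← hρ.nullity_erase_add_one hL]
    exact Nat.le_add_left 1 _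
  have := hρ.mul_add_one_le_card hm one_le_nullity
  exact le_antisymm hL.card_le (by lia)

theorem repairGroup_eq_of_not_disjoint (hρ : IsOptimalLRCRank ρ m r) (hm : 2 ≤ m)
    (hL : IsRepairGroup ρ r i L) (hL' : IsRepairGroup ρ r i' L') (h : ¬ Disjoint L L') :
    L = L' := by
  by_contra hne
  have card_L := hρ.card_repairGroup (by lia) hL
  have card_L' := hρ.card_repairGroup (by lia) hL'
  have card_inter : #(L ∩ L') < r + 1 := by
    rw [← card_L]
    refine card_lt_card (inter_subset_left.ssubset_of_ne fun h_inter ↦ hne ?_)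
    exact eq_of_subset_of_card_le (inter_eq_left.mp h_inter) (by lia)
  have nullity_inter : nullity ρ (L ∩ L') = 0 := by
    by_contra hpos
    have := hρ.mul_add_one_le_card (show 1 ≤ m by lia) (Nat.one_le_iff_ne_zero.mpr hpos)
    lia
  have two_le_nullity_union : 2 ≤ nullity ρ (L ∪ L') := by
    have := hρ.nullity_add_nullity_le L L'
    have := hρ.nullity_erase_add_one hL
    have := hρ.nullity_erase_add_one hL'
    lia
  have card_union : 2 * (r + 1) ≤ #(L ∪ L') := hρ.mul_add_one_le_card hm two_le_nullity_union
  have inter_nonempty : 0 < #(L ∩ L') := card_pos.mpr (not_disjoint_iff_nonempty_inter.mp h)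
  have := card_union_add_card_inter L L'
  lia

theorem add_one_dvd_card (hρ : IsOptimalLRCRank ρ m r) (hm : 2 ≤ m) :
    r + 1 ∣ Fintype.card α := by
  choose L hL using hρ.exists_isRepairGroup
  refine dvd_card_of_forall_mem_eq (fun i ↦ (hL i).mem)
    (fun i ↦ hρ.card_repairGroup (by lia) (hL i)) fun i j hj ↦ ?_
  exact hρ.repairGroup_eq_of_not_disjoint hm (hL j) (hL i)
    (not_disjoint_iff.mpr ⟨j, (hL j).mem, hj⟩)

end IsOptimalLRCRank

end Rank

section Code

variable {F ι : Type*} [Field F]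

/-- Restriction of the codewords of `C` to the coordinates in `S`: its range is the code punctured
outside `S`, and its kernel consists of the codewords that vanish on `S`. -/
def codeRestrict (C : Submodule F (ι → F)) (S : Finset ι) : C →ₗ[F] (S → F) :=
  (LinearMap.funLeft F F ((↑) : S → ι)).domRestrict C

/-- The rank function of the code `C`: the dimension of its restriction to `S`. -/
noncomputable def codeRank (C : Submodule F (ι → F)) (S : Finset ι) : ℕ :=
  Module.finrank F (codeRestrict C S).range

variable {C : Submodule F (ι → F)} {S R : Finset ι} {i : ι} {r : ℕ}

theorem mem_ker_codeRestrict {c : C} : c ∈ (codeRestrict C S).ker ↔ ∀ j ∈ S, c.1 j = 0 := by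
  simp [codeRestrict, funext_iff, LinearMap.funLeft_apply]

theorem ker_codeRestrict_anti {S T : Finset ι} (h : S ⊆ T) :
    (codeRestrict C T).ker ≤ (codeRestrict C S).ker :=
  fun _ hc ↦ mem_ker_codeRestrict.mpr fun j hj ↦ mem_ker_codeRestrict.mp hc j (h hj)

theorem ker_codeRestrict_union [DecidableEq ι] (S T : Finset ι) :
    (codeRestrict C (S ∪ T)).ker = (codeRestrict C S).ker ⊓ (codeRestrict C T).ker := by
  ext c
  simp only [Submodule.mem_inf, mem_ker_codeRestrict, mem_union, or_imp, forall_and]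

theorem codeRank_le_card (C : Submodule F (ι → F)) (S : Finset ι) : codeRank C S ≤ #S := by
  simpa [codeRank] using Submodule.finrank_le (codeRestrict C S).range

theorem codeRank_add_finrank_ker [Finite ι] (C : Submodule F (ι → F)) (S : Finset ι) :
    codeRank C S + Module.finrank F (codeRestrict C S).ker = Module.finrank F C :=
  (codeRestrict C S).finrank_range_add_finrank_ker

theorem isSubmodularRank_codeRank [Finite ι] [DecidableEq ι] (C : Submodule F (ι → F)) :
    IsSubmodularRank (codeRank C) where
  le_card := codeRank_le_card C
  union_add_inter_le S T := by
    have sup_le_inter : (codeRestrict C S).ker ⊔ (codeRestrict C T).ker ≤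
        (codeRestrict C (S ∩ T)).ker :=
      sup_le (ker_codeRestrict_anti inter_subset_left) (ker_codeRestrict_anti inter_subset_right)
    have := Submodule.finrank_mono sup_le_inter
    have := Submodule.finrank_sup_add_finrank_inf_eq (codeRestrict C S).ker (codeRestrict C T).ker
    rw [← ker_codeRestrict_union] at this
    have := codeRank_add_finrank_ker C
    grind

theorem codeRank_insert_of_forall_eq [Finite ι] [DecidableEq ι]
    (h : ∀ c ∈ C, ∀ c' ∈ C, (∀ j ∈ R, c j = c' j) → c i = c' i) :
    codeRank C (insert i R) = codeRank C R := by
  have ker_eq : (codeRestrict C (insert i R)).ker = (codeRestrict C R).ker := by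
    refine (ker_codeRestrict_anti (subset_insert i R)).antisymm fun c hc ↦ ?_
    rw [mem_ker_codeRestrict] at hc ⊢
    exact forall_mem_insert _ _ _ |>.mpr ⟨h c c.2 0 C.zero_mem hc, hc⟩
  have := codeRank_add_finrank_ker C R
  have := codeRank_add_finrank_ker C (insert i R)
  rw [ker_eq] at this
  lia

variable [Fintype ι]

theorem codeRank_univ (C : Submodule F (ι → F)) : codeRank C univ = Module.finrank F C := by
  refine LinearMap.finrank_range_of_inj (LinearMap.ker_eq_bot.mp (LinearMap.ker_eq_bot'.mpr ?_))
  intro c hc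
  ext j
  exact mem_ker_codeRestrict.mp hc j (mem_univ j)

theorem HasLocality.exists_isRepairGroup [DecidableEq ι] (h : HasLocality C i r) :
    ∃ L, IsRepairGroup (codeRank C) r i L := by
  obtain ⟨R, hi, hR, hrepair⟩ := h
  refine ⟨insert i R, mem_insert_self i R, (card_insert_le i R).trans (by lia), ?_⟩
  rw [erase_insert hi, codeRank_insert_of_forall_eq hrepair]

theorem card_add_hammingNorm_le {M : Type*} [Zero M] [DecidableEq M] {c : ι → M}
    (hc : ∀ j ∈ S, c j = 0) : #S + hammingNorm c ≤ Fintype.card ι := by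
  classical
  have disjoint_support : Disjoint S ({j | c j ≠ 0} : Finset ι) := by
    rw [disjoint_left]
    simpa using hc
  rw [hammingNorm, ← card_union_of_disjoint disjoint_support]
  exact card_le_univ _

theorem card_add_minDist_le [DecidableEq F] (hS : codeRank C S < Module.finrank F C) :
    #S + minDist C ≤ Fintype.card ι := by
  have ker_ne_bot : (codeRestrict C S).ker ≠ ⊥ := by
    intro h
    have := codeRank_add_finrank_ker C S
    rw [h, finrank_bot] at this
    lia
  obtain ⟨c, hc, hc0⟩ := Submodule.exists_mem_ne_zero_of_ne_bot ker_ne_bot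
  have minDist_le : minDist C ≤ hammingNorm c.1 := Nat.sInf_le ⟨c, c.2, by simpa using hc0, rfl⟩
  have := card_add_hammingNorm_le (mem_ker_codeRestrict.mp hc)
  lia

end Code

theorem stmt_7_general {F ι : Type*} [Field F] [DecidableEq F] [Fintype ι] {k r : ℕ}
    (hrk : r < k) (hdvd : r ∣ k) (C : Submodule F (ι → F)) (hCk : Module.finrank F C = k)
    (hloc : ∀ i, HasLocality C i r) (hd : Fintype.card ι + 2 ≤ minDist C + k + k / r) :
    r + 1 ∣ Fintype.card ι := by
  classical
  obtain ⟨m, rfl⟩ := hdvd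
  have r_pos : 0 < r := Nat.pos_of_mul_pos_right (Nat.zero_lt_of_lt hrk)
  have two_le_m : 2 ≤ m := (Nat.lt_mul_iff_one_lt_right r_pos).mp hrk
  rw [Nat.mul_div_cancel_left m r_pos] at hd
  have card_add_two_le (S : Finset ι) (hS : codeRank C S < m * r) : #S + 2 ≤ m * r + m := by
    have := card_add_minDist_le (C := C) (S := S) (by lia)
    lia
  have optimal : IsOptimalLRCRank (codeRank C) m r :=
    { isSubmodularRank_codeRank C with
      rank_univ := by rw [codeRank_univ, hCk, mul_comm]
      card_add_two_le := card_add_two_le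
      exists_isRepairGroup := fun i ↦ (hloc i).exists_isRepairGroup }
  exact optimal.add_one_dvd_card two_le_m

/-- For an `(n,k,r)` LRC with all symbol locality, `1 ≤ r < k`, `r ∣ k`, meeting the
Singleton-like bound `d = n - k - k/r + 2`, we must have `(r+1) ∣ n`. -/
theorem stmt_7 {F : Type*} [Field F] [Fintype F] [DecidableEq F]
    {n k r : ℕ} (hr : 1 ≤ r) (hrk : r < k) (hdvd : r ∣ k)
    (C : Submodule F (Fin n → F)) (hCk : Module.finrank F C = k)
    (hloc : ∀ i : Fin n, HasLocality C i r)
    (hd : (minDist C : ℤ) = (n : ℤ) - k - (k / r : ℕ) + 2) :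
    (r + 1) ∣ n := by
  simpa using stmt_7_general hrk hdvd C hCk hloc (by rw [Fintype.card_fin]; lia)
end

section
/- Let q be a prime power, m ≥ 1, and let β_1, …, β_n be elements of F_{q^m}. Consider the n×n Moore matrix B with entries B_{ij} = β_i^{q^{j−1}} for 1 ≤ i, j ≤ n. Then det(B) ≠ 0 if and only if β_1, …, β_n are linearly independent over the subfield F_q. -/
/-!
Let `q = |K|`. The rows of the Moore matrix are the images of the `βᵢ` under the `K`-linear map
`x ↦ (x, x ^ q, x ^ q ^ 2, …)`, so a `K`-linear relation between the `βᵢ` passes to the rows.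
Conversely, a vector `a` in the right kernel is the coefficient vector of a linearized polynomial
`∑ⱼ aⱼ X ^ q ^ j` vanishing at every `βᵢ`. Such a polynomial acts `K`-linearly, so it vanishes on
the span of the `βᵢ`. If these are independent, the span has `q ^ n` elements, which exceeds the
degree of the polynomial; hence `a = 0`.
-/

open Matrix Polynomial

section MooreMatrix

variable {ι R : Type*} {n : ℕ}

/-- The rectangular Moore matrix with `n` columns, whose `i`-th row is
`β i, β i ^ q, …, β i ^ q ^ (n - 1)`. -/
def mooreMatrix [Monoid R] (q n : ℕ) (β : ι → R) : Matrix ι (Fin n) R :=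
  of fun i j ↦ β i ^ q ^ (j : ℕ)

/-- The linearized polynomial, or `q`-polynomial, `∑ⱼ aⱼ X ^ q ^ j`. No relation between `q` and
the characteristic of `R` is built in. -/
noncomputable def linearizedPolynomial [Semiring R] (q : ℕ) (a : Fin n → R) : R[X] :=
  ∑ j : Fin n, monomial (q ^ (j : ℕ)) (a j)

theorem coeff_linearizedPolynomial [Semiring R] {q : ℕ} (hq : 1 < q) (a : Fin n → R) (j : Fin n) :
    (linearizedPolynomial q a).coeff (q ^ (j : ℕ)) = a j := by
  simp [linearizedPolynomial, coeff_monomial, Nat.pow_right_inj hq, Fin.val_inj]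

theorem linearizedPolynomial_eq_zero_iff [Semiring R] {q : ℕ} (hq : 1 < q) {a : Fin n → R} :
    linearizedPolynomial q a = 0 ↔ a = 0 := by
  refine ⟨fun h ↦ funext fun j ↦ ?_, fun h ↦ by simp [linearizedPolynomial, h]⟩
  rw [← coeff_linearizedPolynomial hq a, h, coeff_zero, Pi.zero_apply]

theorem degree_linearizedPolynomial_lt [Semiring R] {q : ℕ} (hq : 1 < q) (a : Fin n → R) :
    (linearizedPolynomial q a).degree < (q ^ n : ℕ) := by
  rw [← mem_degreeLT]
  refine Submodule.sum_mem _ fun j _ ↦ mem_degreeLT.mpr ?_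
  exact (degree_monomial_le _ _).trans_lt (mod_cast Nat.pow_lt_pow_right hq j.isLt)

theorem eval_linearizedPolynomial [Semiring R] (q : ℕ) (a : Fin n → R) (x : R) :
    (linearizedPolynomial q a).eval x = ∑ j, a j * x ^ q ^ (j : ℕ) := by
  simp [linearizedPolynomial, eval_finsetSum]

theorem mooreMatrix_mulVec [CommSemiring R] (q : ℕ) (β : ι → R) (a : Fin n → R) :
    mooreMatrix q n β *ᵥ a = fun i ↦ (linearizedPolynomial q a).eval (β i) := by
  ext i
  simp [mooreMatrix, eval_linearizedPolynomial, mulVec, dotProduct, mul_comm]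

end MooreMatrix

section FiniteField

variable {ι K L : Type*} [Field K] [Fintype K] [CommRing L] [Algebra K L] {n : ℕ}

local notation "q" => Fintype.card K

variable (K L n) in
/-- The first `n` powers of the `q`-Frobenius, where `q` is the cardinality of `K`, assembled into
the `K`-linear map `x ↦ (x, x ^ q, …, x ^ q ^ (n - 1))`. -/
noncomputable def frobeniusPowers : L →ₗ[K] Fin n → L :=
  LinearMap.pi fun j ↦ (FiniteField.frobeniusAlgHom K L ^ (j : ℕ)).toLinearMap

theorem frobeniusPowers_apply (x : L) (j : Fin n) :
    frobeniusPowers K L n x j = x ^ q ^ (j : ℕ) := by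
  simp [frobeniusPowers, FiniteField.coe_frobeniusAlgHom, pow_iterate]

theorem row_mooreMatrix (β : ι → L) : (mooreMatrix q n β).row = frobeniusPowers K L n ∘ β := by
  ext i j
  simp [mooreMatrix, frobeniusPowers_apply]

theorem eval_linearizedPolynomial_eq_dotProduct (a : Fin n → L) (x : L) :
    (linearizedPolynomial q a).eval x = frobeniusPowers K L n x ⬝ᵥ a := by
  simp [eval_linearizedPolynomial, dotProduct, frobeniusPowers_apply, mul_comm]

theorem eval_linearizedPolynomial_linearCombination [Fintype ι] (a : Fin n → L) (β : ι → L)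
    (c : ι → K) :
    (linearizedPolynomial q a).eval (Fintype.linearCombination K β c) =
      Fintype.linearCombination K (fun i ↦ (linearizedPolynomial q a).eval (β i)) c := by
  simp only [eval_linearizedPolynomial_eq_dotProduct, Fintype.linearCombination_apply, map_sum,
    map_smul, sum_dotProduct, smul_dotProduct]

theorem linearIndependent_of_row_mooreMatrix [Nontrivial L] {β : ι → L}
    (h : LinearIndependent L (mooreMatrix q n β).row) : LinearIndependent K β := by
  rw [row_mooreMatrix] at h
  exact (h.restrict_scalars' K).of_comp

variable [IsDomain L] [Fintype ι] {β : ι → L}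

theorem linearizedPolynomial_eq_zero_of_linearIndependent_roots (hβ : LinearIndependent K β)
    (hn : n ≤ Fintype.card ι) {a : Fin n → L}
    (hroot : ∀ i, (linearizedPolynomial q a).eval (β i) = 0) :
    linearizedPolynomial q a = 0 := by
  classical
  refine eq_zero_of_degree_lt_of_eval_index_eq_zero Finset.univ
    (v := Fintype.linearCombination K β) hβ.fintypeLinearCombination_injective.injOn ?_ fun c _ ↦ ?_
  · refine (degree_linearizedPolynomial_lt Fintype.one_lt_card a).trans_le ?_
    rw [Finset.card_univ, Fintype.card_fun]
    exact mod_cast Nat.pow_le_pow_right Fintype.card_pos hn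
  · rw [eval_linearizedPolynomial_linearCombination]
    simp [hroot, Fintype.linearCombination_apply]

theorem eq_zero_of_mooreMatrix_mulVec_eq_zero (hβ : LinearIndependent K β)
    (hn : n ≤ Fintype.card ι) {a : Fin n → L} (ha : mooreMatrix q n β *ᵥ a = 0) : a = 0 := by
  rw [mooreMatrix_mulVec] at ha
  exact (linearizedPolynomial_eq_zero_iff Fintype.one_lt_card).mp
    (linearizedPolynomial_eq_zero_of_linearIndependent_roots hβ hn (congrFun ha))

end FiniteField

theorem stmt_10_general {K L : Type*} [Field K] [Fintype K] [CommRing L] [IsDomain L]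
    [Algebra K L] {n : ℕ} (β : Fin n → L) :
    (mooreMatrix (Fintype.card K) n β).det ≠ 0 ↔ LinearIndependent K β := by
  refine ⟨fun hdet ↦ linearIndependent_of_row_mooreMatrix
    (linearIndependent_rows_of_det_ne_zero hdet), fun hβ hdet ↦ ?_⟩
  obtain ⟨a, ha_ne, ha⟩ := exists_mulVec_eq_zero_iff.mpr hdet
  exact ha_ne (eq_zero_of_mooreMatrix_mulVec_eq_zero hβ (Fintype.card_fin n).ge ha)

/-- Moore determinant criterion: for `β₁, …, βₙ` in `F_{q^m}`, the `n × n` Moore matrix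
`B` with `B i j = βᵢ ^ (q ^ j)` has nonzero determinant iff `β₁, …, βₙ` are linearly
independent over the subfield `F_q`. -/
theorem stmt_10 {K L : Type*} [Field K] [Fintype K] [Field L] [Fintype L] [Algebra K L]
    {m : ℕ} (hm : 1 ≤ m) (hcard : Fintype.card L = Fintype.card K ^ m)
    {n : ℕ} (β : Fin n → L) :
    (Matrix.of fun i j : Fin n => β i ^ Fintype.card K ^ (j : ℕ)).det ≠ 0 ↔
      LinearIndependent K β :=
  stmt_10_general β
end

section
/- Let q be a prime power, F_{q^m} an extension field of F_q, and let l ≥ 1, r ≥ 1. Let α_{i,j} ∈ F_{q^m} for i ∈ {1,…,l}, j ∈ {1,…,r+1}, and suppose the lr elements {α_{i,j} − α_{i,r+1} : i ∈ {1,…,l}, j ∈ {1,…,r}} are linearly independent over F_q. Then for every choice of indices w_1, …, w_l with w_i ∈ {1,…,r+1}, the lr elements {α_{i,m} − α_{i,w_i} : i ∈ {1,…,l}, m ∈ {1,…,r+1}, m ≠ w_i} are linearly independent over F_q. -/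
/-!
The span of the differences `p i j -ᵥ p i (w i)`, `j ≠ w i`, is the direction of the affine span of
the `i`-th family of points, and their linear independence says that this family is affinely
independent; neither depends on the base point `w i`. Since a family indexed by a sigma type is
linearly independent exactly when its fibres are and their spans are independent submodules, the
linear independence of all the differences together does not depend on the base points either.
-/

section LinearIndependentSigma

variable {R M ι : Type*} {κ : ι → Type*} [Ring R] [AddCommGroup M] [Module R M]

theorem iSupIndep_span_range_of_linearIndependent_sigma {f : ∀ i, κ i → M}
    (hf : LinearIndependent R fun x : Σ i, κ i => f x.1 x.2) :
    iSupIndep fun i => Submodule.span R (Set.range (f i)) := by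
  intro i
  have hdisj : Disjoint (Sigma.fst ⁻¹' {i} : Set (Σ i, κ i)) (Sigma.fst ⁻¹' {i}ᶜ) :=
    disjoint_compl_right.preimage Sigma.fst
  refine (hf.disjoint_span_image hdisj).mono (Submodule.span_mono ?_) ?_
  · rintro _ ⟨j, rfl⟩
    exact ⟨⟨i, j⟩, rfl, rfl⟩
  · refine iSup₂_le fun i' hi' => Submodule.span_mono ?_
    rintro _ ⟨j, rfl⟩
    exact ⟨⟨i', j⟩, hi', rfl⟩

theorem linearIndependent_sigma_iff {f : ∀ i, κ i → M} :
    LinearIndependent R (fun x : Σ i, κ i => f x.1 x.2) ↔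
      (∀ i, LinearIndependent R (f i)) ∧
        iSupIndep fun i => Submodule.span R (Set.range (f i)) := by
  refine ⟨fun hf => ⟨fun i => hf.comp (Sigma.mk i) sigma_mk_injective,
    iSupIndep_span_range_of_linearIndependent_sigma hf⟩, fun ⟨hfiber, hspan⟩ => ?_⟩
  exact linearIndependent_iUnion_finite hfiber fun _ _ _ hi => hspan.disjoint_biSup hi

end LinearIndependentSigma

section Differences

variable {k V P ι : Type*} [Ring k] [AddCommGroup V] [Module k V] [AddTorsor V P]

theorem linearIndependent_sigma_vsub_iff {κ : ι → Type*} (p : ∀ i, κ i → P) (w : ∀ i, κ i) :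
    LinearIndependent k
        (fun x : Σ i, {j // j ≠ w i} => (p x.1 x.2 -ᵥ p x.1 (w x.1) : V)) ↔
      (∀ i, AffineIndependent k (p i)) ∧ iSupIndep fun i => vectorSpan k (Set.range (p i)) := by
  simp only [affineIndependent_iff_linearIndependent_vsub k (p _) (w _),
    vectorSpan_range_eq_span_range_vsub_right_ne k (p _) (w _)]
  exact linearIndependent_sigma_iff (f := fun i (j : {j // j ≠ w i}) => (p i j -ᵥ p i (w i) : V))

theorem linearIndependent_sigma_vsub_iff_succAbove {r : ℕ} (p : ι → Fin (r + 1) → P)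
    (w : ι → Fin (r + 1)) :
    LinearIndependent k
        (fun x : Σ i, {j // j ≠ w i} => (p x.1 x.2 -ᵥ p x.1 (w x.1) : V)) ↔
      LinearIndependent k
        (fun x : ι × Fin r => (p x.1 ((w x.1).succAbove x.2) -ᵥ p x.1 (w x.1) : V)) :=
  (linearIndependent_equiv'
    (Equiv.sigmaEquivProdOfEquiv fun i => (finSuccAboveEquiv (w i)).symm).symm rfl).symm

theorem stmt_11_general {κ : ι → Type*} (p : ∀ i, κ i → P) {v : ∀ i, κ i}
    (hv : LinearIndependent k
      (fun x : Σ i, {j // j ≠ v i} => (p x.1 x.2 -ᵥ p x.1 (v x.1) : V)))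
    (w : ∀ i, κ i) :
    LinearIndependent k
      (fun x : Σ i, {j // j ≠ w i} => (p x.1 x.2 -ᵥ p x.1 (w x.1) : V)) :=
  (linearIndependent_sigma_vsub_iff p w).2 ((linearIndependent_sigma_vsub_iff p v).1 hv)

end Differences

/-- If the elements `α i j - α i (r+1)` for `i ∈ [1,l]`, `j ∈ [1,r]` are linearly independent
over `F_q`, then for every choice `w : i ↦ wᵢ ∈ [1,r+1]` the elements
`α i m - α i wᵢ` for `i ∈ [1,l]`, `m ∈ [1,r+1] \ {wᵢ}` are linearly independent over `F_q`. -/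
theorem stmt_11 {K L : Type*} [Field K] [Fintype K] [Field L] [Fintype L] [Algebra K L]
    {l r : ℕ} (hl : 1 ≤ l) (hr : 1 ≤ r)
    (α : Fin l → Fin (r + 1) → L)
    (hind : LinearIndependent K
      (fun p : Fin l × Fin r => α p.1 p.2.castSucc - α p.1 (Fin.last r)))
    (w : Fin l → Fin (r + 1)) :
    LinearIndependent K
      (fun p : (i : Fin l) × {m : Fin (r + 1) // m ≠ w i} =>
        α p.1 p.2.val - α p.1 (w p.1)) :=
  stmt_11_general α ((linearIndependent_sigma_vsub_iff_succAbove α fun _ => Fin.last r).2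
    (by simpa only [Fin.succAbove_last, vsub_eq_sub] using hind)) w
end

section
/- (Construction 2) Let F_q be a finite field, r ≥ 3, l ≥ 1, and n = l(r+1). Let α_{i,j} ∈ F_q for i ∈ {1,…,l}, j ∈ {1,…,r+1}, with α_{i,j_1} ≠ α_{i,j_2} whenever j_1 ≠ j_2. Let H be the (l+2)×n matrix over F_q whose columns are indexed by pairs (i,j), such that for i' ∈ {1,…,l} the entry of row i' in column (i,j) equals 1 if i = i' and 0 otherwise, the entry of row l+1 in column (i,j) equals α_{i,j}, and the entry of row l+2 in column (i,j) equals α_{i,j}^2. Then the linear code C = {x ∈ F_q^n : Hx = 0} has dimension n − l − 2, every coordinate of C has locality r, and the minimum distance of C equals 4, which equals the Singleton-like bound n − k − ⌈k/r⌉ + 2 for k = n − l − 2. -/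
/-!
A codeword whose entries sum to zero on every group has at least two nonzero entries in each group
that it meets, so weight at least four if it meets two groups. If it lives on one group and the
global rows are `α, …, αᵐ`, its moments against `1, α, …, αᵐ` vanish, so the Vandermonde argument
forces weight at least `m + 2`; counting dimensions in one group gives a word attaining this. The
indicator row of a group is a parity check of weight `r + 1`, which gives locality `r`.
-/

lemma hammingNorm_eq_sum_hammingNorm_fiber {R ι κ : Type*} [Zero R] [DecidableEq R] [Fintype ι]
    [Fintype κ] (c : ι × κ → R) : hammingNorm c = ∑ i, hammingNorm fun j ↦ c (i, j) := by
  simp only [hammingNorm, Finset.card_filter, Fintype.sum_prod_type]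

section LinearCodes

variable {F ι : Type*} [Field F] [Fintype ι]

lemma minDist_eq_of_exists_of_forall [DecidableEq F] {C : Submodule F (ι → F)} {d : ℕ}
    (hle : ∃ c ∈ C, c ≠ 0 ∧ hammingNorm c ≤ d)
    (hge : ∀ c ∈ C, c ≠ 0 → d ≤ hammingNorm c) : minDist C = d := by
  obtain ⟨c, hc, hc0, hcd⟩ := hle
  refine IsLeast.csInf_eq ⟨⟨c, hc, hc0, hcd.antisymm (hge c hc hc0)⟩, ?_⟩
  rintro _ ⟨c', hc', hc'0, rfl⟩
  exact hge c' hc' hc'0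

lemma hasLocality_of_dotProduct_eq_zero [DecidableEq F] {C : Submodule F (ι → F)} {i : ι}
    {h : ι → F} (hi : h i ≠ 0) (hC : ∀ c ∈ C, h ⬝ᵥ c = 0) :
    HasLocality C i (hammingNorm h - 1) := by
  classical
  have hmem : i ∈ ({j | h j ≠ 0} : Finset ι) := by simpa using hi
  refine ⟨({j | h j ≠ 0} : Finset ι).erase i, Finset.notMem_erase _ _,
    (Finset.card_erase_of_mem hmem).le, fun c hc c' hc' heq ↦ ?_⟩
  have hdot : ∑ j, h j * (c j - c' j) = 0 := hC (c - c') (C.sub_mem hc hc')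
  have hsingle : h i * (c i - c' i) = 0 := by
    rwa [Finset.sum_eq_single_of_mem i (Finset.mem_univ i)] at hdot
    intro j _ hji
    by_cases hj : h j = 0
    · rw [hj, zero_mul]
    · rw [heq j (by simp [hj, hji]), sub_self, mul_zero]
  exact sub_eq_zero.1 ((mul_eq_zero.1 hsingle).resolve_left hi)

lemma exists_ne_zero_mulVec_eq_zero_hammingNorm_le [DecidableEq F] {μ : Type*} [Fintype μ]
    (A : Matrix μ ι F) (hA : Fintype.card μ < Fintype.card ι) :
    ∃ x ≠ 0, A.mulVec x = 0 ∧ hammingNorm x ≤ Fintype.card μ + 1 := by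
  classical
  obtain ⟨s, -, hs⟩ := Finset.exists_subset_card_eq (s := (Finset.univ : Finset ι))
    (Nat.succ_le_of_lt hA)
  have hdep : ¬ LinearIndepOn F A.col (s : Set ι) := fun h ↦ by
    simpa [hs] using h.fintype_card_le_finrank
  obtain ⟨f, hf, i, his, hfi⟩ := not_linearIndepOn_finset_iff.1 hdep
  refine ⟨fun j ↦ if j ∈ s then f j else 0, fun h ↦ hfi (by simpa [his] using congrFun h i),
    ?_, ?_⟩
  · simpa [Matrix.mulVec_eq_sum, ite_smul, Matrix.col] using hf
  · rw [← Nat.succ_eq_add_one, ← hs]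
    exact Finset.card_le_card fun j hj ↦ by
      by_contra hjs
      simp [hjs] at hj

lemma finrank_ker_mulVecLin_of_linearIndependent_row {μ : Type*} [Fintype μ] {A : Matrix μ ι F}
    (hA : LinearIndependent F A.row) :
    Module.finrank F (LinearMap.ker A.mulVecLin) = Fintype.card ι - Fintype.card μ := by
  have hrank : Module.finrank F (LinearMap.range A.mulVecLin) = Fintype.card μ := hA.rank_matrix
  have hnullity := LinearMap.finrank_range_add_finrank_ker A.mulVecLin
  rw [hrank, Module.finrank_fintype_fun_eq_card] at hnullity
  exact Nat.eq_sub_of_add_eq' hnullity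

end LinearCodes

lemma sum_eval_mul_eq_zero_of_moments_eq_zero {R κ : Type*} [CommSemiring R] [Fintype κ]
    {β x : κ → R} {d : ℕ} (hx : ∀ k < d, ∑ j, β j ^ k * x j = 0) {p : Polynomial R}
    (hp : p.degree < d) : ∑ j, p.eval (β j) * x j = 0 := by
  rcases eq_or_ne p 0 with rfl | hp0
  · simp
  simp only [p.eval_eq_sum_range' ((Polynomial.natDegree_lt_iff_degree_lt hp0).2 hp),
    Finset.sum_mul, mul_assoc]
  rw [Finset.sum_comm]
  exact Finset.sum_eq_zero fun k hk ↦ by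
    rw [← Finset.mul_sum, hx k (Finset.mem_range.1 hk), mul_zero]

lemma lt_hammingNorm_of_moments_eq_zero {F κ : Type*} [Field F] [DecidableEq F] [Fintype κ]
    {β x : κ → F} {d : ℕ} (hβ : Function.Injective β) (hx0 : x ≠ 0)
    (hx : ∀ k < d, ∑ j, β j ^ k * x j = 0) : d < hammingNorm x := by
  classical
  by_contra! hle
  set s : Finset κ := {j | x j ≠ 0} with hs
  obtain ⟨i, hi⟩ := Function.ne_iff.1 hx0
  have his : i ∈ s := by simpa [hs] using hi
  have hdeg : (Lagrange.basis s β i).degree < d := by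
    rw [Lagrange.degree_basis hβ.injOn his]
    have hpos : 0 < s.card := Finset.card_pos.2 ⟨i, his⟩
    exact_mod_cast (Nat.sub_one_lt hpos.ne').trans_le hle
  have hsum := sum_eval_mul_eq_zero_of_moments_eq_zero hx hdeg
  rw [Finset.sum_eq_single_of_mem i (Finset.mem_univ i), Lagrange.eval_basis_self hβ.injOn his,
    one_mul] at hsum
  · exact hi hsum
  · intro j _ hji
    by_cases hj : x j = 0
    · rw [hj, mul_zero]
    · rw [Lagrange.eval_basis_of_ne hji.symm (by simpa [hs] using hj), zero_mul]

/-- The parity-check matrix of Construction 2 with `m` global rows. Coordinates are pairs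
`(group, position)`; row `Sum.inl i` is the indicator of group `i`, and the global row `Sum.inr k`
holds the powers `α ^ (k + 1)`, since the zeroth power is a sum of the group rows. -/
def groupedParityCheck {F ι κ : Type*} [Field F] [DecidableEq ι] (α : ι → κ → F) (m : ℕ) :
    Matrix (ι ⊕ Fin m) (ι × κ) F :=
  Matrix.of (Sum.elim (fun i p ↦ if p.1 = i then 1 else 0) fun k p ↦ α p.1 p.2 ^ (k.val + 1))

namespace groupedParityCheck

variable {F ι κ : Type*} [Field F] [DecidableEq ι] {α : ι → κ → F}

lemma eq_two_of_rows {H : Matrix (ι ⊕ Fin 2) (ι × κ) F}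
    (hgroup : ∀ i p, H (Sum.inl i) p = if p.1 = i then 1 else 0)
    (hfirst : ∀ p, H (Sum.inr 0) p = α p.1 p.2)
    (hsquare : ∀ p, H (Sum.inr 1) p = α p.1 p.2 ^ 2) : H = groupedParityCheck α 2 := by
  ext (i | k) p
  · exact hgroup i p
  · fin_cases k <;> simp [groupedParityCheck, hfirst, hsquare]

variable [Fintype κ] {m : ℕ}

lemma linearIndependent_row [Finite ι] [Nonempty ι] (hα : ∀ i, Function.Injective (α i))
    (hm : m < Fintype.card κ) : LinearIndependent F (groupedParityCheck α m).row := by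
  have := Fintype.ofFinite ι
  rw [Fintype.linearIndependent_iff]
  intro g hg
  have hpoly (i : ι) (j : κ) :
      g (Sum.inl i) + ∑ k : Fin m, g (Sum.inr k) * α i j ^ (k.val + 1) = 0 := by
    simpa [groupedParityCheck, Matrix.row] using congrFun hg (i, j)
  obtain ⟨e⟩ : Nonempty (Fin (m + 1) ↪ κ) :=
    Function.Embedding.nonempty_of_card_le (by simpa using hm)
  have hcoeff (i : ι) : Fin.cons (g (Sum.inl i)) (fun k ↦ g (Sum.inr k)) = (0 : Fin (m + 1) → F) :=
    Matrix.eq_zero_of_forall_index_sum_mul_pow_eq_zero ((hα i).comp e.injective) fun j ↦ by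
      simpa [Fin.sum_univ_succ] using hpoly i (e j)
  rintro (i | k)
  · exact congrFun (hcoeff i) 0
  · exact congrFun (hcoeff (Classical.arbitrary ι)) k.succ

variable [Fintype ι] {c : ι × κ → F}

lemma inl_dotProduct (i : ι) : groupedParityCheck α m (Sum.inl i) ⬝ᵥ c = ∑ j, c (i, j) := by
  simp [groupedParityCheck, dotProduct, Fintype.sum_prod_type_right]

lemma mem_ker_iff : c ∈ LinearMap.ker (groupedParityCheck α m).mulVecLin ↔
    (∀ i, ∑ j, c (i, j) = 0) ∧ ∀ k : Fin m, ∑ i, ∑ j, α i j ^ (k.val + 1) * c (i, j) = 0 := by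
  rw [LinearMap.mem_ker, Matrix.mulVecLin_apply, funext_iff, Sum.forall]
  simp only [Matrix.mulVec, inl_dotProduct, Pi.zero_apply]
  simp only [groupedParityCheck, Matrix.of_apply, Sum.elim_inr, dotProduct, Fintype.sum_prod_type]

lemma mem_ker_iff_moments_eq_zero {i : ι} (hc : ∀ i' ≠ i, ∀ j, c (i', j) = 0) :
    c ∈ LinearMap.ker (groupedParityCheck α m).mulVecLin ↔
      ∀ k < m + 1, ∑ j, α i j ^ k * c (i, j) = 0 := by
  have hlocal : (∀ i', ∑ j, c (i', j) = 0) ↔ ∑ j, c (i, j) = 0 :=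
    ⟨fun h ↦ h i, fun h i' ↦ by
      rcases eq_or_ne i' i with rfl | hne
      · exact h
      · simp [hc i' hne]⟩
  have hglobal (k : ℕ) : ∑ i', ∑ j, α i' j ^ k * c (i', j) = ∑ j, α i j ^ k * c (i, j) :=
    Fintype.sum_eq_single i fun i' hne ↦ by simp [hc i' hne]
  simp only [mem_ker_iff, hlocal, hglobal, Nat.forall_lt_succ_left', Fin.forall_iff, pow_zero,
    one_mul]

lemma hasLocality (p : ι × κ) :
    HasLocality (LinearMap.ker (groupedParityCheck α m).mulVecLin) p (Fintype.card κ - 1) := by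
  classical
  have hweight : hammingNorm (groupedParityCheck α m (Sum.inl p.1)) = Fintype.card κ := by
    rw [hammingNorm_eq_sum_hammingNorm_fiber, Fintype.sum_eq_single p.1]
    · simp [hammingNorm, groupedParityCheck]
    · intro i hi
      simp [hammingNorm, groupedParityCheck, hi]
  rw [← hweight]
  refine hasLocality_of_dotProduct_eq_zero (by simp [groupedParityCheck]) fun c hc ↦ ?_
  rw [inl_dotProduct, (mem_ker_iff.1 hc).1]

lemma finrank_ker [Nonempty ι] (hα : ∀ i, Function.Injective (α i)) (hm : m < Fintype.card κ) :
    Module.finrank F (LinearMap.ker (groupedParityCheck α m).mulVecLin) =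
      Fintype.card ι * Fintype.card κ - Fintype.card ι - m := by
  classical
  rw [finrank_ker_mulVecLin_of_linearIndependent_row (linearIndependent_row hα hm),
    Fintype.card_prod, Fintype.card_sum, Fintype.card_fin, Nat.sub_add_eq]

variable [DecidableEq F]

lemma min_le_hammingNorm (hα : ∀ i, Function.Injective (α i))
    (hc : c ∈ LinearMap.ker (groupedParityCheck α m).mulVecLin) (hc0 : c ≠ 0) :
    min (m + 2) 4 ≤ hammingNorm c := by
  obtain ⟨⟨i, j⟩, hij⟩ := Function.ne_iff.1 hc0
  have hi : (fun j ↦ c (i, j)) ≠ 0 := Function.ne_iff.2 ⟨j, hij⟩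
  rw [hammingNorm_eq_sum_hammingNorm_fiber]
  by_cases hsupp : ∀ i' ≠ i, ∀ j, c (i', j) = 0
  · have hgroup : m + 1 < hammingNorm fun j ↦ c (i, j) :=
      lt_hammingNorm_of_moments_eq_zero (hα i) hi ((mem_ker_iff_moments_eq_zero hsupp).1 hc)
    calc min (m + 2) 4 ≤ m + 2 := min_le_left _ _
      _ ≤ hammingNorm fun j ↦ c (i, j) := hgroup
      _ ≤ _ := Finset.single_le_sum (f := fun i ↦ hammingNorm fun j ↦ c (i, j))
        (fun _ _ ↦ Nat.zero_le _) (Finset.mem_univ i)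
  · push Not at hsupp
    obtain ⟨i', hne, j', hij'⟩ := hsupp
    have htwo (i : ι) (hi : (fun j ↦ c (i, j)) ≠ 0) : 2 ≤ hammingNorm fun j ↦ c (i, j) :=
      lt_hammingNorm_of_moments_eq_zero (hα i) hi fun k hk ↦ by
        simpa [Nat.lt_one_iff.1 hk] using (mem_ker_iff.1 hc).1 i
    calc min (m + 2) 4 ≤ 2 + 2 := min_le_right _ _
      _ ≤ (hammingNorm fun j ↦ c (i, j)) + hammingNorm fun j ↦ c (i', j) :=
        add_le_add (htwo i hi) (htwo i' (Function.ne_iff.2 ⟨j', hij'⟩))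
      _ ≤ _ := Finset.add_le_sum (f := fun i ↦ hammingNorm fun j ↦ c (i, j))
        (fun _ _ ↦ Nat.zero_le _) (Finset.mem_univ i) (Finset.mem_univ i') hne.symm

lemma exists_mem_ker_hammingNorm_le [Nonempty ι] (α : ι → κ → F) (hm : m + 1 < Fintype.card κ) :
    ∃ c ∈ LinearMap.ker (groupedParityCheck α m).mulVecLin, c ≠ 0 ∧ hammingNorm c ≤ m + 2 := by
  let i : ι := Classical.arbitrary ι
  obtain ⟨x, hx0, hx, hweight⟩ := exists_ne_zero_mulVec_eq_zero_hammingNorm_le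
    (Matrix.of fun (k : Fin (m + 1)) j ↦ α i j ^ k.val) (by simpa using hm)
  let c : ι × κ → F := fun p ↦ if p.1 = i then x p.2 else 0
  have hci : (fun j ↦ c (i, j)) = x := by simp [c]
  have hsupp (i' : ι) (hne : i' ≠ i) (j : κ) : c (i', j) = 0 := if_neg hne
  refine ⟨c, (mem_ker_iff_moments_eq_zero hsupp).2 fun k hk ↦ ?_, fun h ↦ hx0 ?_, ?_⟩
  · simpa [c, Matrix.mulVec, dotProduct] using congrFun hx ⟨k, hk⟩
  · rw [← hci, h]
    rfl
  · rw [hammingNorm_eq_sum_hammingNorm_fiber, Fintype.sum_eq_single i, hci]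
    · simpa using hweight
    · intro i' hne
      simp [hsupp i' hne, hammingNorm]

lemma minDist_ker [Nonempty ι] (hα : ∀ i, Function.Injective (α i)) (hm : m ≤ 2)
    (hκ : m + 1 < Fintype.card κ) :
    minDist (LinearMap.ker (groupedParityCheck α m).mulVecLin) = m + 2 :=
  minDist_eq_of_exists_of_forall (exists_mem_ker_hammingNorm_le α hκ) fun _ hc hc0 ↦
    (le_min le_rfl (by lia)).trans (min_le_hammingNorm hα hc hc0)

end groupedParityCheck

lemma ceil_mul_sub_div {l m r : ℕ} (hl : 1 ≤ l) (hm : m < r) :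
    ⌈((l * r - m : ℕ) : ℚ) / r⌉ = l := by
  have hmq : (m : ℚ) < r := by exact_mod_cast hm
  have hr : (0 : ℚ) < r := (Nat.cast_nonneg m).trans_lt hmq
  have hle : m ≤ l * r := hm.le.trans (Nat.le_mul_of_pos_left r hl)
  rw [Int.ceil_eq_iff, lt_div_iff₀ hr, div_le_iff₀ hr]
  push_cast [hle]
  constructor <;> linarith [Nat.cast_nonneg (α := ℚ) m]

lemma add_two_eq_singleton_bound {l m n r : ℕ} (hl : 1 ≤ l) (hm : m < r)
    (hn : n = l * (r + 1)) :
    ((m + 2 : ℕ) : ℤ) =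
      (n : ℤ) - (n - l - m : ℕ) - ⌈((n - l - m : ℕ) : ℚ) / r⌉ + 2 := by
  have hle : m ≤ l * r := hm.le.trans (Nat.le_mul_of_pos_left r hl)
  have hn' : n = l * r + l := by rw [hn, mul_add_one]
  have hdim : n - l - m = l * r - m := by rw [hn', Nat.add_sub_cancel]
  rw [hdim, ceil_mul_sub_div hl hm, hn']
  lia

theorem stmt_15_general {F ι κ : Type*} [Field F] [DecidableEq F] [Fintype ι] [DecidableEq ι]
    [Nonempty ι] [Fintype κ] {m n r : ℕ} (hm : m ≤ 2) (hr : m < r)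
    (hκ : Fintype.card κ = r + 1) (hn : n = Fintype.card ι * (r + 1))
    (α : ι → κ → F) (hα : ∀ i, Function.Injective (α i)) :
    Module.finrank F (LinearMap.ker (groupedParityCheck α m).mulVecLin) =
      n - Fintype.card ι - m ∧
    (∀ p, HasLocality (LinearMap.ker (groupedParityCheck α m).mulVecLin) p r) ∧
    minDist (LinearMap.ker (groupedParityCheck α m).mulVecLin) = m + 2 ∧
    ((m + 2 : ℕ) : ℤ) = (n : ℤ) - (n - Fintype.card ι - m : ℕ) -
      ⌈((n - Fintype.card ι - m : ℕ) : ℚ) / r⌉ + 2 := by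
  refine ⟨?_, fun p ↦ ?_, groupedParityCheck.minDist_ker hα hm (by lia),
    add_two_eq_singleton_bound Fintype.card_pos hr hn⟩
  · rw [groupedParityCheck.finrank_ker hα (by lia), hκ, hn]
  · simpa [hκ] using groupedParityCheck.hasLocality (α := α) (m := m) p

/-- Construction 2: with `r ≥ 3`, `n = l(r+1)`, distinct `α i ·` within each group, and the
parity-check matrix with locality rows and Vandermonde rows `α, α²`, the code
`{x : Hx = 0}` has dimension `n - l - 2`, all symbol locality `r`, and minimum distance `4`,
which equals the Singleton-like bound `n - k - ⌈k/r⌉ + 2` for `k = n - l - 2`. -/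
theorem stmt_15 {F : Type*} [Field F] [Fintype F] [DecidableEq F]
    {l r n : ℕ} (hr : 3 ≤ r) (hl : 1 ≤ l) (hn : n = l * (r + 1))
    (α : Fin l → Fin (r + 1) → F) (hα : ∀ i : Fin l, Function.Injective (α i))
    (H : Matrix (Fin l ⊕ Fin 2) (Fin l × Fin (r + 1)) F)
    (hH1 : ∀ (i' : Fin l) (p : Fin l × Fin (r + 1)),
      H (Sum.inl i') p = if p.1 = i' then 1 else 0)
    (hH2 : ∀ p : Fin l × Fin (r + 1), H (Sum.inr 0) p = α p.1 p.2)
    (hH3 : ∀ p : Fin l × Fin (r + 1), H (Sum.inr 1) p = α p.1 p.2 ^ 2) :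
    Module.finrank F (LinearMap.ker H.mulVecLin) = n - l - 2 ∧
    (∀ p : Fin l × Fin (r + 1), HasLocality (LinearMap.ker H.mulVecLin) p r) ∧
    minDist (LinearMap.ker H.mulVecLin) = 4 ∧
    (4 : ℤ) = (n : ℤ) - (n - l - 2 : ℕ) - ⌈((n - l - 2 : ℕ) : ℚ) / r⌉ + 2 := by
  have : Nonempty (Fin l) := Fin.pos_iff_nonempty.1 hl
  obtain rfl := groupedParityCheck.eq_two_of_rows hH1 hH2 hH3
  simpa using stmt_15_general le_rfl hr (Fintype.card_fin _) (by simpa using hn) α hα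
end
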